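/- Let f : ℝ → ℝ be smooth and let u_0 ∈ L^∞(ℝ). The global Kruzkov entropy solution u of u_t + f(u)_x = 0, u(0,x) = u_0(x), can be represented as u(t,x) = U(t, α(t,x)), where α(t,·) is a locally bounded monotone increasing function of x (representing the generalized characteristics), and U(t,·), as a function of α, satisfies |∂_α U(t,·)|_{BV(ℝ)} ≤ |u_0'|_{BV(ℝ)} whenever the right-hand side is finite, and, for every 1 < p ≤ ∞, |∂_α U(t,·)|_{L^p(ℝ)} ≤ |u_0'|_{L^p(ℝ)} whenever the right-hand side is finite; in particular U(t,·) is then Hölder continuous in α. -/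

import Mathlib

open MeasureTheory
open scoped ENNReal NNReal

/-- `u` is a Kruzkov entropy solution of `u_t + f(u)_x = 0`, `u(0,·) = u₀`:
for every `k ∈ ℝ` and every nonnegative smooth compactly supported `φ`,
`∫∫_{t ≥ 0} (|u-k| φ_t + sign(u-k)(f(u)-f(k)) φ_x) + ∫ |u₀-k| φ(0,·) ≥ 0`. -/
def IsKruzkovSolution (f : ℝ → ℝ) (u₀ : ℝ → ℝ) (u : ℝ → ℝ → ℝ) : Prop :=
  ∀ (k : ℝ) (φ : ℝ × ℝ → ℝ), ContDiff ℝ (⊤ : ℕ∞) φ → HasCompactSupport φ →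
    (∀ q, 0 ≤ φ q) →
    0 ≤ (∫ q in Set.Ici (0:ℝ) ×ˢ (Set.univ : Set ℝ),
          (|u q.1 q.2 - k| * deriv (fun s => φ (s, q.2)) q.1
            + Real.sign (u q.1 q.2 - k) * (f (u q.1 q.2) - f k)
                * deriv (fun y => φ (q.1, y)) q.2))
        + ∫ x, |u₀ x - k| * φ (0, x)


/-- Kruzkov entropy flux. -/
noncomputable def kflux (f : ℝ → ℝ) (a b : ℝ) : ℝ := Real.sign (a - b) * (f a - f b)

lemma kflux_symm (f : ℝ → ℝ) (a b : ℝ) : kflux f a b = kflux f b a := by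
  unfold kflux
  have : Real.sign (a - b) = - Real.sign (b - a) := by
    rw [← neg_sub b a, Real.sign_neg]
  rw [this]; ring

lemma abs_sign_le (x : ℝ) : |Real.sign x| ≤ 1 := by
  rcases Real.sign_apply_eq x with h | h | h <;> rw [h] <;> norm_num

lemma abs_kflux_le (f : ℝ → ℝ) (a b : ℝ) : |kflux f a b| ≤ |f a - f b| := by
  unfold kflux
  rw [abs_mul]
  exact mul_le_of_le_one_left (abs_nonneg _) (abs_sign_le _)

lemma abs_add_sign (X p : ℝ) (h : |p| ≤ |X|) : |X + p| = |X| + Real.sign X * p := by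
  rcases lt_trichotomy X 0 with hX | hX | hX
  · rw [Real.sign_of_neg hX, abs_of_neg hX] at *
    have := abs_le.1 h
    rw [abs_of_nonpos (by linarith)]; ring
  · subst hX
    have : p = 0 := by simpa using h
    simp [this]
  · rw [Real.sign_of_pos hX, abs_of_pos hX] at *
    have := abs_le.1 h
    rw [abs_of_nonneg (by linarith)]; ring

lemma lf_entropy_step (f : ℝ → ℝ) (lam a b k : ℝ)
    (ha : |lam * (f a - f k)| ≤ |a - k|) (hb : |lam * (f b - f k)| ≤ |b - k|) :
    |(a + b) / 2 - lam / 2 * (f b - f a) - k| ≤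
      (|a - k| + lam * kflux f a k) / 2 + (|b - k| - lam * kflux f b k) / 2 := by
  have h1 := abs_add_sign (a - k) (lam * (f a - f k)) ha
  have h2 := abs_add_sign (b - k) (-(lam * (f b - f k))) (by rwa [abs_neg])
  have e1 : |a - k| + lam * kflux f a k = |a - k + lam * (f a - f k)| := by
    rw [h1]; unfold kflux; ring
  have e2 : |b - k| - lam * kflux f b k = |b - k + -(lam * (f b - f k))| := by
    rw [h2]; unfold kflux; ring
  rw [e1, e2]
  have : (a + b) / 2 - lam / 2 * (f b - f a) - k =
      (a - k + lam * (f a - f k)) / 2 + (b - k + -(lam * (f b - f k))) / 2 := by ring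
  rw [this]
  refine (abs_add_le _ _).trans ?_
  rw [abs_div, abs_div, abs_two]

/-- Staggered Lax-Friedrichs scheme; the site `(n, j)` sits at time `n * lam * h` and
position `(2 * j + n) * h`. -/
noncomputable def lf (f u₀ : ℝ → ℝ) (lam h : ℝ) : ℕ → ℤ → ℝ
  | 0, j => u₀ (2 * (j : ℝ) * h)
  | n + 1, j => (lf f u₀ lam h n j + lf f u₀ lam h n (j + 1)) / 2
      - lam / 2 * (f (lf f u₀ lam h n (j + 1)) - f (lf f u₀ lam h n j))

lemma lf_repr (f u₀ : ℝ → ℝ) (hc : Continuous u₀) (lam h M : ℝ) (hh : 0 < h)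
    (hB : ∀ x, |u₀ x| ≤ M)
    (hL : ∀ a b, |a| ≤ M → |b| ≤ M → |lam * (f a - f b)| ≤ |a - b|) (n : ℕ) :
    ∃ Y : ℤ → ℝ, (∀ j, lf f u₀ lam h n j = u₀ (Y j)) ∧ Monotone Y ∧
      ∀ j : ℤ, |Y j - (2 * (j : ℝ) + n) * h| ≤ n * h := by
  induction n with
  | zero =>
    refine ⟨fun j => 2 * (j : ℝ) * h, fun j => by simp [lf], ?_, fun j => by simp⟩
    intro i j hij
    have : (i : ℝ) ≤ j := by exact_mod_cast hij
    simp only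
    gcongr
  | succ n ih =>
    obtain ⟨Y, hY, hm, hb⟩ := ih
    have key : ∀ j : ℤ, ∃ z, (Y j ≤ z ∧ z ≤ Y (j + 1)) ∧ lf f u₀ lam h (n + 1) j = u₀ z := by
      intro j
      have hle : Y j ≤ Y (j + 1) := hm (by linarith)
      have hmem : lf f u₀ lam h (n + 1) j ∈ Set.uIcc (u₀ (Y j)) (u₀ (Y (j + 1))) := by
        rw [lf, hY, hY]
        set a := u₀ (Y j)
        set b := u₀ (Y (j + 1))
        have h1 := abs_le.1 (hL b a (hB _) (hB _))
        rw [Set.mem_uIcc]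
        rcases le_total a b with hab | hab
        · rw [abs_of_nonneg (by linarith)] at h1
          left; constructor <;> linarith
        · rw [abs_of_nonpos (by linarith)] at h1
          right; constructor <;> linarith
      obtain ⟨z, hz, hz'⟩ := intermediate_value_uIcc hc.continuousOn hmem
      rw [Set.uIcc_of_le hle] at hz
      exact ⟨z, hz, hz'.symm⟩
    choose Z hZ1 hZ2 using key
    refine ⟨Z, hZ2, monotone_int_of_le_succ fun j => (hZ1 j).2.trans (hZ1 (j + 1)).1, ?_⟩
    intro j
    have h1 := abs_le.1 (hb j)
    have h2 := abs_le.1 (hb (j + 1))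
    have h3 := hZ1 j
    push_cast at *
    rw [abs_le]
    constructor <;> nlinarith

lemma sum_shift (J : ℤ) (c χ : ℤ → ℝ) (hJ : ∀ j : ℤ, J ≤ |j| → χ j = 0) :
    ∑ j ∈ Finset.Icc (-J) J, c j * χ (j - 1) = ∑ j ∈ Finset.Icc (-J) J, c (j + 1) * χ j := by
  rw [← tsum_eq_sum (L := SummationFilter.unconditional ℤ) (f := fun j => c j * χ (j - 1)),
    ← tsum_eq_sum (L := SummationFilter.unconditional ℤ) (f := fun j => c (j + 1) * χ j),
    ← (Equiv.addRight (1 : ℤ)).tsum_eq]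
  · simp
  · intro j hj
    rw [hJ j, mul_zero]
    by_contra h
    push Not at h
    rw [abs_lt] at h
    exact hj (Finset.mem_Icc.2 ⟨by linarith, by linarith⟩)
  · intro j hj
    rw [hJ (j - 1), mul_zero]
    by_contra h
    push Not at h
    rw [abs_lt] at h
    exact hj (Finset.mem_Icc.2 ⟨by linarith, by linarith⟩)

lemma abstract_sum (N : ℕ) (J : ℤ) (e q χ : ℕ → ℤ → ℝ)
    (hstep : ∀ n j, e (n + 1) j ≤ (e n j + q n j) / 2 + (e n (j + 1) - q n (j + 1)) / 2)
    (hχ : ∀ n j, 0 ≤ χ n j) (h0 : ∀ j, χ 0 j = 0) (hN : ∀ j, χ N j = 0)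
    (hJ : ∀ n, n ≤ N → ∀ j : ℤ, J ≤ |j| → χ n j = 0) :
    0 ≤ ∑ n ∈ Finset.range N, ∑ j ∈ Finset.Icc (-J) J,
      (e n j * ((χ (n + 1) j + χ (n + 1) (j - 1)) / 2 - χ n j)
        + q n j * ((χ (n + 1) j - χ (n + 1) (j - 1)) / 2)) := by
  set E : ℕ → ℝ := fun n => ∑ j ∈ Finset.Icc (-J) J, e n j * χ n j with hE
  have htel : ∑ n ∈ Finset.range N, (E (n + 1) - E n) = 0 := by
    rw [Finset.sum_range_sub]
    simp [hE, h0, hN]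
  rw [← htel]
  refine Finset.sum_le_sum fun n hn => ?_
  have hn' : n + 1 ≤ N := Finset.mem_range.1 hn
  have h1 : ∑ j ∈ Finset.Icc (-J) J,
      (e n j * ((χ (n + 1) j + χ (n + 1) (j - 1)) / 2 - χ n j)
        + q n j * ((χ (n + 1) j - χ (n + 1) (j - 1)) / 2)) =
      ∑ j ∈ Finset.Icc (-J) J, (e n j + q n j) / 2 * χ (n + 1) j
      + ∑ j ∈ Finset.Icc (-J) J, (e n j - q n j) / 2 * χ (n + 1) (j - 1) - E n := by
    rw [hE, ← Finset.sum_add_distrib, ← Finset.sum_sub_distrib]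
    refine Finset.sum_congr rfl fun j _ => ?_
    ring
  rw [h1, sum_shift J (fun j => (e n j - q n j) / 2) (χ (n + 1)) (hJ _ hn'),
    ← Finset.sum_add_distrib]
  gcongr
  rw [hE]
  refine Finset.sum_le_sum fun j _ => ?_
  rw [← add_mul]
  exact mul_le_mul_of_nonneg_right (hstep n j) (hχ _ _)

lemma taylor_bump (r : ℝ → ℝ) (hr : ContDiff ℝ (⊤ : ℕ∞) r) (hs : HasCompactSupport r) :
    ∃ C : ℝ, 0 ≤ C ∧ (∀ z, |deriv r z| ≤ C) ∧ (∀ z h, |r (z + h) - r z| ≤ C * |h|) ∧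
      ∀ z h, |r (z + h) - r z - h * deriv r z| ≤ C * h ^ 2 := by
  have hd : Differentiable ℝ r := hr.differentiable (by simp)
  have hr' : ContDiff ℝ 1 (deriv r) := by
    have : ContDiff ℝ 2 r := hr.of_le (WithTop.coe_le_coe.2 le_top : ((2 : ℕ∞) : WithTop ℕ∞) ≤ _)
    exact ((contDiff_succ_iff_deriv (n := 1)).1 this).2.2
  obtain ⟨C1, hC1⟩ := hs.deriv.exists_bound_of_continuous hr'.continuous
  obtain ⟨K, hK⟩ := hr'.lipschitzWith_of_hasCompactSupport hs.deriv (by norm_num)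
  refine ⟨max (max C1 K) 0, le_max_right _ _, fun z => ?_, fun z h => ?_, fun z h => ?_⟩
  · exact (hC1 z).trans ((le_max_left _ _).trans (le_max_left _ _))
  · have := convex_univ.norm_image_sub_le_of_norm_deriv_le (f := r) (C := max (max C1 K) 0)
      (x := z) (y := z + h) (fun x _ => hd x)
      (fun x _ => (hC1 x).trans ((le_max_left _ _).trans (le_max_left _ _))) trivial trivial
    simpa using this
  · have := (convex_Icc (z - |h|) (z + |h|)).norm_image_sub_le_of_norm_hasDerivWithin_le
      (f := fun y => r y - y * deriv r z) (f' := fun y => deriv r y - deriv r z)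
      (C := K * |h|) (x := z) (y := z + h)
      (fun x _ => ((hd x).hasDerivAt.sub ((hasDerivAt_id x).mul_const _ |>.congr_deriv (by simp))).hasDerivWithinAt)
      (fun x hx => by
        have := hK.dist_le_mul x z
        rw [Real.dist_eq, Real.dist_eq] at this
        refine this.trans ?_
        refine mul_le_mul_of_nonneg_left ?_ K.coe_nonneg
        rw [abs_le]; constructor <;> linarith [hx.1, hx.2])
      ⟨by linarith [abs_nonneg h], by linarith [abs_nonneg h]⟩
      ⟨by linarith [neg_abs_le h], by linarith [le_abs_self h]⟩
    have e : r (z + h) - (z + h) * deriv r z - (r z - z * deriv r z) =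
      r (z + h) - r z - h * deriv r z := by ring
    simp only [e, Real.norm_eq_abs, add_sub_cancel_left] at this
    refine this.trans ?_
    rw [mul_assoc, abs_mul_abs_self, ← sq]
    gcongr
    exact (le_max_right _ _).trans (le_max_left _ _)



lemma V_ineq (f u₀ : ℝ → ℝ) (lam h M C : ℝ) (hlam : 0 < lam) (hh : 0 < h) (hM : 0 ≤ M)
    (hC : 0 ≤ C)
    (hL : ∀ a b, |a| ≤ M → |b| ≤ M → |lam * (f a - f b)| ≤ |a - b|)
    (hv : ∀ n j, |lf f u₀ lam h n j| ≤ M)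
    (r d : ℝ → ℝ) (hr0 : ∀ z, 0 ≤ r z) (hd0 : ∀ z, 0 ≤ d z)
    (hr1 : ∀ z, r z ≤ 1) (hd1 : ∀ z, d z ≤ 1) (hrneg : ∀ z, z ≤ 0 → r z = 0)
    (hrL : ∀ z h, |r (z + h) - r z| ≤ C * |h|)
    (hrT : ∀ z h, |r (z + h) - r z - h * deriv r z| ≤ C * h ^ 2)
    (hdD : ∀ z, |deriv d z| ≤ C)
    (hdT : ∀ z h, |d (z + h) - d z - h * deriv d z| ≤ C * h ^ 2)
    (N J : ℕ) (t x k : ℝ) (ht : 0 ≤ t) (hk : |k| ≤ M)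
    (hN : r (N * (lam * h) - t) = 0)
    (hJ : ∀ n : ℕ, n ≤ N → ∀ j : ℤ, (J : ℤ) ≤ |j| → d (x - (2 * j + n) * h) = 0) :
    ∑ n ∈ Finset.range N, ∑ j ∈ Finset.Icc (-(J : ℤ)) J,
      (|k - lf f u₀ lam h n j| *
          (-(deriv r (n * (lam * h) - t) * d (x - (2 * j + n) * h)))
        + kflux f k (lf f u₀ lam h n j) *
          (r (n * (lam * h) - t) * deriv d (x - (2 * j + n) * h)))
      ≤ N * (2 * J + 1) * (h * (2 * M * (C * lam ^ 2 + 2 * C + C ^ 2 * lam) / lam)) := by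
  set v := lf f u₀ lam h with hvdef
  set χ : ℕ → ℤ → ℝ := fun n j => r (n * (lam * h) - t) * d (x - (2 * j + n) * h) with hχ
  have key := abstract_sum N J (fun n j => |v n j - k|) (fun n j => lam * kflux f (v n j) k) χ
    (fun n j => by
      have := lf_entropy_step f lam (v n j) (v n (j + 1)) k (hL _ _ (hv _ _) hk)
        (hL _ _ (hv _ _) hk)
      simpa [hvdef, lf] using this)
    (fun n j => mul_nonneg (hr0 _) (hd0 _))
    (fun j => by simp only [hχ]; rw [hrneg _ (by simpa using ht), zero_mul])
    (fun j => by simp only [hχ]; rw [hN, zero_mul])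
    (fun n hn j hj => by simp only [hχ]; rw [hJ n hn j hj, mul_zero])
  have hτ : 0 < lam * h := mul_pos hlam hh
  have site : ∀ n : ℕ, ∀ j : ℤ,
      (|k - v n j| * (-(deriv r (n * (lam * h) - t) * d (x - (2 * j + n) * h)))
        + kflux f k (v n j) * (r (n * (lam * h) - t) * deriv d (x - (2 * j + n) * h)))
        * (lam * h) +
      (|v n j - k| * ((χ (n + 1) j + χ (n + 1) (j - 1)) / 2 - χ n j)
        + lam * kflux f (v n j) k * ((χ (n + 1) j - χ (n + 1) (j - 1)) / 2))
      ≤ h ^ 2 * (2 * M * (C * lam ^ 2 + 2 * C + C ^ 2 * lam)) := by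
    intro n j
    set σ := n * (lam * h) - t with hσ
    set z := x - (2 * j + n) * h with hz
    have e1 : χ (n + 1) j = r (σ + lam * h) * d (z + -h) := by
      simp only [hχ, hσ, hz]; push_cast; congr 2 <;> ring
    have e2 : χ (n + 1) (j - 1) = r (σ + lam * h) * d (z + h) := by
      simp only [hχ, hσ, hz]; push_cast; congr 2 <;> ring
    have e3 : χ n j = r σ * d z := rfl
    rw [e1, e2, e3, kflux_symm f k, abs_sub_comm k]
    have hE : |v n j - k| ≤ 2 * M := by
      refine (abs_sub _ _).trans ?_
      linarith [hv n j]
    have hF : |lam * kflux f (v n j) k| ≤ 2 * M := by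
      refine le_trans ?_ hE
      refine le_trans ?_ (hL (v n j) k (hv _ _) hk)
      rw [abs_mul, abs_mul]
      exact mul_le_mul_of_nonneg_left (abs_kflux_le _ _ _) (abs_nonneg _)
    have T1 := hrT σ (lam * h)
    have T2 := hdT z h
    have T3 := hdT z (-h)
    have T4 := hrL σ (lam * h)
    have T5 := hdD z
    set R1 := r (σ + lam * h) - r σ - (lam * h) * deriv r σ with hR1
    set D1 := d (z + h) - d z - h * deriv d z with hD1
    set D2 := d (z + -h) - d z - (-h) * deriv d z with hD2
    set R2 := r (σ + lam * h) - r σ with hR2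
    have hrr : |r (σ + lam * h)| ≤ 1 := by rw [abs_of_nonneg (hr0 _)]; exact hr1 _
    have hdd : |d z| ≤ 1 := by rw [abs_of_nonneg (hd0 _)]; exact hd1 _
    have b1 : |R1 * d z + r (σ + lam * h) * ((D1 + D2) / 2)| ≤
        C * (lam * h) ^ 2 + C * h ^ 2 := by
      refine (abs_add_le _ _).trans (add_le_add ?_ ?_)
      · rw [abs_mul]
        exact (mul_le_of_le_one_right (abs_nonneg _) hdd).trans T1
      · rw [abs_mul]
        refine (mul_le_of_le_one_left (abs_nonneg _) hrr).trans ?_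
        rw [neg_sq] at T3
        rw [abs_le] at *
        constructor <;> linarith
    have b2 : |r (σ + lam * h) * ((D2 - D1) / 2) - h * deriv d z * R2| ≤
        C * h ^ 2 + C ^ 2 * lam * h ^ 2 := by
      refine (abs_sub _ _).trans (add_le_add ?_ ?_)
      · rw [abs_mul]
        refine (mul_le_of_le_one_left (abs_nonneg _) hrr).trans ?_
        rw [neg_sq] at T3
        rw [abs_le] at *
        constructor <;> linarith
      · rw [abs_mul, abs_mul, abs_of_pos hh]
        rw [abs_of_pos hτ] at T4
        calc h * |deriv d z| * |R2| ≤ h * C * (C * (lam * h)) := by gcongr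
          _ = _ := by ring
    have eq : (|v n j - k| * (-(deriv r σ * d z)) + kflux f (v n j) k * (r σ * deriv d z))
        * (lam * h) +
        (|v n j - k| * ((r (σ + lam * h) * d (z + -h) + r (σ + lam * h) * d (z + h)) / 2
          - r σ * d z)
        + lam * kflux f (v n j) k * ((r (σ + lam * h) * d (z + -h)
          - r (σ + lam * h) * d (z + h)) / 2))
        = |v n j - k| * (R1 * d z + r (σ + lam * h) * ((D1 + D2) / 2))
        + lam * kflux f (v n j) k *
          (r (σ + lam * h) * ((D2 - D1) / 2) - h * deriv d z * R2) := by
      rw [hR1, hD1, hD2, hR2]; ring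
    rw [eq]
    calc _ ≤ |(|v n j - k|) * (R1 * d z + r (σ + lam * h) * ((D1 + D2) / 2))|
        + |lam * kflux f (v n j) k *
          (r (σ + lam * h) * ((D2 - D1) / 2) - h * deriv d z * R2)| :=
            add_le_add (le_abs_self _) (le_abs_self _)
      _ ≤ 2 * M * (C * (lam * h) ^ 2 + C * h ^ 2)
          + 2 * M * (C * h ^ 2 + C ^ 2 * lam * h ^ 2) := by
            rw [abs_mul, abs_mul, abs_abs]
            gcongr
      _ = _ := by ring
  have tot := Finset.sum_le_sum fun n (_ : n ∈ Finset.range N) =>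
    Finset.sum_le_sum fun j (_ : j ∈ Finset.Icc (-(J : ℤ)) J) => site n j
  simp only [Finset.sum_add_distrib (f := fun j => (_ : ℝ) * (lam * h))] at tot
  rw [Finset.sum_add_distrib] at tot
  simp only [← Finset.sum_mul] at tot
  have hcard : ((Finset.Icc (-(J : ℤ)) J).card : ℝ) = 2 * J + 1 := by
    rw [Int.card_Icc]
    have : ((J : ℤ) + 1 - -(J : ℤ)).toNat = 2 * J + 1 := by omega
    rw [this]; push_cast; ring
  simp only [Finset.sum_const, nsmul_eq_mul, hcard, Finset.card_range] at tot
  have := le_of_add_le_of_nonneg_left tot key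
  rw [← mul_le_mul_iff_left₀ hτ]
  refine this.trans (le_of_eq ?_)
  field_simp


lemma hcs_prod (r d : ℝ → ℝ) (hr : HasCompactSupport r) (hd : HasCompactSupport d) (c c' : ℝ) :
    HasCompactSupport (fun q : ℝ × ℝ => r (c - q.1) * d (q.2 - c')) := by
  refine HasCompactSupport.intro (K := ((fun z => c - z) '' tsupport r) ×ˢ
    ((fun z => z + c') '' tsupport d))
    ((IsCompact.image hr (by fun_prop)).prod (IsCompact.image hd (by fun_prop))) ?_
  intro q hq
  by_contra hne
  apply hq
  refine ⟨⟨c - q.1, subset_tsupport _ (left_ne_zero_of_mul hne), by ring⟩,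
    ⟨q.2 - c', subset_tsupport _ (right_ne_zero_of_mul hne), by ring⟩⟩

lemma integrable_site (w κ ψ : ℝ × ℝ → ℝ) (C : ℝ) (hw : Measurable w)
    (hb : ∀ q, 0 ≤ q.1 → |w q| ≤ C) (hκ : Continuous κ) (hs : HasCompactSupport κ)
    (hψ : Continuous ψ) :
    Integrable (fun q => w q * (ψ q * κ q))
      (volume.restrict (Set.Ici (0:ℝ) ×ˢ (Set.univ : Set ℝ))) := by
  refine Integrable.bdd_mul (c := C) ?_ hw.aestronglyMeasurable ?_
  · exact ((hψ.mul hκ).integrable_of_hasCompactSupport hs.mul_left).restrict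
  · refine (ae_restrict_iff' (measurableSet_Ici.prod MeasurableSet.univ)).2 (ae_of_all _ ?_)
    intro q hq
    exact hb q hq.1

lemma measurable_real_sign : Measurable Real.sign := by
  have : Real.sign = fun r : ℝ => if r < 0 then -1 else if 0 < r then 1 else 0 := by
    funext r; rfl
  rw [this]
  exact Measurable.ite measurableSet_Iio measurable_const
    (Measurable.ite measurableSet_Ioi measurable_const measurable_const)

lemma U_ineq (f u₀ : ℝ → ℝ) (u : ℝ → ℝ → ℝ) (lam h M C T X : ℝ) (hlam : 0 < lam) (hh : 0 < h)
    (hM : 0 ≤ M) (hC : 0 ≤ C) (hT : 0 ≤ T) (hX : 0 ≤ X)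
    (hfc : Continuous f) (hu₀m : Measurable u₀) (hu₀b : ∀ x, |u₀ x| ≤ M)
    (hum : Measurable (Function.uncurry u)) (hub : ∀ t x, 0 ≤ t → |u t x| ≤ M)
    (hK : IsKruzkovSolution f u₀ u)
    (hL : ∀ a b, |a| ≤ M → |b| ≤ M → |lam * (f a - f b)| ≤ |a - b|)
    (hv : ∀ n j, |lf f u₀ lam h n j| ≤ M)
    (r d : ℝ → ℝ) (hrs : ContDiff ℝ (⊤ : ℕ∞) r) (hds : ContDiff ℝ (⊤ : ℕ∞) d)
    (hrc : HasCompactSupport r) (hdc : HasCompactSupport d)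
    (hr0 : ∀ z, 0 ≤ r z) (hd0 : ∀ z, 0 ≤ d z)
    (hr1 : ∀ z, r z ≤ 1) (hd1 : ∀ z, d z ≤ 1) (hrneg : ∀ z, z ≤ 0 → r z = 0)
    (hrL : ∀ z h, |r (z + h) - r z| ≤ C * |h|)
    (hrT : ∀ z h, |r (z + h) - r z - h * deriv r z| ≤ C * h ^ 2)
    (hdD : ∀ z, |deriv d z| ≤ C)
    (hdT : ∀ z h, |d (z + h) - d z - h * deriv d z| ≤ C * h ^ 2)
    (N J : ℕ)
    (hN : ∀ t, t ≤ T → r (N * (lam * h) - t) = 0)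
    (hJ : ∀ x, |x| ≤ X → ∀ n : ℕ, n ≤ N → ∀ j : ℤ, (J : ℤ) ≤ |j| → d (x - (2 * j + n) * h) = 0)
    (ψ ψt ψx G : ℝ × ℝ → ℝ) (hψs : ContDiff ℝ (⊤ : ℕ∞) ψ) (hψtc : Continuous ψt)
    (hψxc : Continuous ψx) (hGc : Continuous G)
    (hψ0 : ∀ q, 0 ≤ ψ q) (hψ1 : ∀ q, ψ q ≤ 1)
    (hψt : ∀ q : ℝ × ℝ, HasDerivAt (fun s => ψ (s, q.2)) (ψt q) q.1)
    (hψx : ∀ q : ℝ × ℝ, HasDerivAt (fun y => ψ (q.1, y)) (ψx q) q.2)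
    (hG : ∀ q, 0 ≤ q.1 → ψt q + lam⁻¹ * |ψx q| ≤ - G q)
    (hsupp : ∀ q, 0 ≤ q.1 → ψ q ≠ 0 → q.1 ≤ T ∧ |q.2| ≤ X) :
    IntegrableOn (fun q : ℝ × ℝ => ∑ n ∈ Finset.range N,
      ∑ j ∈ Finset.Icc (-(J : ℤ)) J, |u q.1 q.2 - lf f u₀ lam h n j| *
        (G q * (r (n * (lam * h) - q.1) * d (q.2 - (2 * j + n) * h))))
      (Set.Ici (0:ℝ) ×ˢ (Set.univ : Set ℝ)) ∧
    ∫ q in Set.Ici (0:ℝ) ×ˢ (Set.univ : Set ℝ), ∑ n ∈ Finset.range N,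
      ∑ j ∈ Finset.Icc (-(J : ℤ)) J, |u q.1 q.2 - lf f u₀ lam h n j| *
        (G q * (r (n * (lam * h) - q.1) * d (q.2 - (2 * j + n) * h)))
    ≤ N * (2 * J + 1) * (h * (2 * M * (C * lam ^ 2 + 2 * C + C ^ 2 * lam) / lam)) * (T * (2 * X))
     + ∫ x, ∑ n ∈ Finset.range N, ∑ j ∈ Finset.Icc (-(J : ℤ)) J,
        |u₀ x - lf f u₀ lam h n j| *
          (ψ (0, x) * (r (n * (lam * h) - 0) * d (x - (2 * j + n) * h))) := by
  set v := lf f u₀ lam h with hvdef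
  set E := N * (2 * J + 1) * (h * (2 * M * (C * lam ^ 2 + 2 * C + C ^ 2 * lam) / lam)) with hE
  set S : Set (ℝ × ℝ) := Set.Ici (0:ℝ) ×ˢ (Set.univ : Set ℝ) with hS
  have hSm : MeasurableSet S := measurableSet_Ici.prod MeasurableSet.univ
  have hrd : Differentiable ℝ r := hrs.differentiable (by simp)
  have hdd : Differentiable ℝ d := hds.differentiable (by simp)
  have hr'c : Continuous (deriv r) := hrs.continuous_deriv (by simp)
  have hd'c : Continuous (deriv d) := hds.continuous_deriv (by simp)
  have hrcont := hrs.continuous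
  have hdcont := hds.continuous
  have hψcont := hψs.continuous
  have hE0 : 0 ≤ E := by rw [hE]; positivity
  have hum' : Measurable (fun q : ℝ × ℝ => u q.1 q.2) := hum
  -- the integrand
  let I : ℕ → ℤ → ℝ × ℝ → ℝ := fun n j q =>
    |u q.1 q.2 - v n j| * (ψt q * (r (n * (lam * h) - q.1) * d (q.2 - (2 * j + n) * h)))
    - |u q.1 q.2 - v n j| * (ψ q * (deriv r (n * (lam * h) - q.1) * d (q.2 - (2 * j + n) * h)))
    + kflux f (u q.1 q.2) (v n j) *
      (ψx q * (r (n * (lam * h) - q.1) * d (q.2 - (2 * j + n) * h)))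
    + kflux f (u q.1 q.2) (v n j) *
      (ψ q * (r (n * (lam * h) - q.1) * deriv d (q.2 - (2 * j + n) * h)))
  have hw1 : ∀ n j, Measurable (fun q : ℝ × ℝ => |u q.1 q.2 - v n j|) := fun n j =>
    continuous_abs.measurable.comp (hum'.sub_const _)
  have hw2 : ∀ n j, Measurable (fun q : ℝ × ℝ => kflux f (u q.1 q.2) (v n j)) := fun n j => by
    unfold kflux
    exact (measurable_real_sign.comp (hum'.sub_const _)).mul
      ((hfc.measurable.comp hum').sub_const _)
  have hb1 : ∀ n j, ∀ q : ℝ × ℝ, 0 ≤ q.1 → |(|u q.1 q.2 - v n j|)| ≤ 2 * M := fun n j q hq => by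
    rw [abs_abs]
    refine (abs_sub _ _).trans ?_
    linarith [hv n j, hub q.1 q.2 hq]
  have hFle : ∀ n j, ∀ q : ℝ × ℝ, 0 ≤ q.1 →
      |kflux f (u q.1 q.2) (v n j)| ≤ lam⁻¹ * |u q.1 q.2 - v n j| := fun n j q hq => by
    have h1 := hL _ _ (hub q.1 q.2 hq) (hv n j)
    rw [abs_mul, abs_of_pos hlam] at h1
    refine (abs_kflux_le _ _ _).trans ?_
    rwa [← div_eq_inv_mul, le_div_iff₀' hlam]
  have hb2 : ∀ n j, ∀ q : ℝ × ℝ, 0 ≤ q.1 →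
      |kflux f (u q.1 q.2) (v n j)| ≤ lam⁻¹ * (2 * M) := fun n j q hq => by
    refine (hFle n j q hq).trans ?_
    have := hb1 n j q hq
    rw [abs_abs] at this
    gcongr
  have hκ : ∀ (n : ℕ) (j : ℤ) (r d : ℝ → ℝ), Continuous r → Continuous d → Continuous
      (fun q : ℝ × ℝ => r (n * (lam * h) - q.1) * d (q.2 - (2 * j + n) * h)) := by
    intro n j r d hr hd
    fun_prop
  have hIint : ∀ n j, Integrable (I n j) (volume.restrict S) := fun n j =>
    (((integrable_site _ _ _ _ (hw1 n j) (hb1 n j) (hκ n j r d hrcont hdcont)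
      (hcs_prod r d hrc hdc _ _) hψtc).sub
    (integrable_site _ _ _ _ (hw1 n j) (hb1 n j) (hκ n j (deriv r) d hr'c hdcont)
      (hcs_prod _ d hrc.deriv hdc _ _) hψcont)).add
    (integrable_site _ _ _ _ (hw2 n j) (hb2 n j) (hκ n j r d hrcont hdcont)
      (hcs_prod r d hrc hdc _ _) hψxc)).add
    (integrable_site _ _ _ _ (hw2 n j) (hb2 n j) (hκ n j r (deriv d) hrcont hd'c)
      (hcs_prod r _ hrc hdc.deriv _ _) hψcont)
  have hsite : ∀ n j, 0 ≤ (∫ q in S, I n j q) + ∫ x, |u₀ x - v n j| *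
          (ψ (0, x) * (r (n * (lam * h) - 0) * d (x - (2 * j + n) * h))) := by
    intro n j
    have := hK (v n j)
      (fun q => ψ q * (r (n * (lam * h) - q.1) * d (q.2 - (2 * j + n) * h)))
      (by
        refine hψs.mul (ContDiff.mul ?_ ?_)
        · exact hrs.comp (contDiff_const.sub contDiff_fst)
        · exact hds.comp (contDiff_snd.sub contDiff_const))
      (hcs_prod r d hrc hdc _ _).mul_left
      (fun q => mul_nonneg (hψ0 q) (mul_nonneg (hr0 _) (hd0 _)))
    refine this.trans (le_of_eq ?_)
    congr 1
    refine setIntegral_congr_fun hSm fun q _ => ?_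
    have d1 : deriv (fun s => ψ (s, q.2) *
        (r (n * (lam * h) - s) * d (q.2 - (2 * j + n) * h))) q.1 =
        ψt q * (r (n * (lam * h) - q.1) * d (q.2 - (2 * j + n) * h)) -
        ψ q * (deriv r (n * (lam * h) - q.1) * d (q.2 - (2 * j + n) * h)) := by
      have hr1 : HasDerivAt (fun s => r (n * (lam * h) - s))
          (-deriv r (n * (lam * h) - q.1)) q.1 := by
        have := (hrd (n * (lam * h) - q.1)).hasDerivAt.comp q.1
          ((hasDerivAt_id q.1).const_sub (n * (lam * h)))
        simpa [Function.comp_def] using this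
      exact (((hψt q).mul (hr1.mul_const (d (q.2 - (2 * j + n) * h)))).congr_deriv (by ring)).deriv
    have d2 : deriv (fun y => ψ (q.1, y) *
        (r (n * (lam * h) - q.1) * d (y - (2 * j + n) * h))) q.2 =
        ψx q * (r (n * (lam * h) - q.1) * d (q.2 - (2 * j + n) * h)) +
        ψ q * (r (n * (lam * h) - q.1) * deriv d (q.2 - (2 * j + n) * h)) := by
      have hr1 : HasDerivAt (fun y => d (y - (2 * j + n) * h))
          (deriv d (q.2 - (2 * j + n) * h)) q.2 := by
        have := (hdd (q.2 - (2 * j + n) * h)).hasDerivAt.comp q.2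
          ((hasDerivAt_id q.2).sub_const ((2 * j + n) * h))
        simpa [Function.comp_def] using this
      exact ((hψx q).mul (hr1.const_mul (r (n * (lam * h) - q.1)))).deriv
    simp only [I, kflux]
    rw [d1, d2]
    ring
  have hinit : ∀ n j, Integrable (fun x => |u₀ x - v n j| *
          (ψ (0, x) * (r (n * (lam * h) - 0) * d (x - (2 * j + n) * h)))) := by
    intro n j
    refine Integrable.bdd_mul (c := 2 * M) ?_
      (continuous_abs.measurable.comp (hu₀m.sub_const _)).aestronglyMeasurable ?_
    · refine Continuous.integrable_of_hasCompactSupport (by fun_prop) ?_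
      refine HasCompactSupport.mul_left (HasCompactSupport.mul_left ?_)
      refine HasCompactSupport.intro (IsCompact.image hdc
        (f := fun z => z + (2 * j + n) * h) (by fun_prop)) ?_
      intro x hx
      by_contra hne
      exact hx ⟨_, subset_tsupport _ hne, by ring⟩
    · refine ae_of_all _ fun x => ?_
      simp only [Real.norm_eq_abs, abs_abs]
      refine (abs_sub _ _).trans ?_
      linarith [hv n j, hu₀b x]
  have hGint : Integrable (fun q : ℝ × ℝ => ∑ n ∈ Finset.range N,
      ∑ j ∈ Finset.Icc (-(J : ℤ)) J, |u q.1 q.2 - v n j| *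
        (G q * (r (n * (lam * h) - q.1) * d (q.2 - (2 * j + n) * h)))) (volume.restrict S) :=
    integrable_finsetSum _ fun n _ => integrable_finsetSum _ fun j _ =>
      integrable_site _ _ _ _ (hw1 n j) (hb1 n j) (hκ n j r d hrcont hdcont)
      (hcs_prod r d hrc hdc _ _) hGc
  have htot : 0 ≤ (∫ q in S, ∑ n ∈ Finset.range N, ∑ j ∈ Finset.Icc (-(J : ℤ)) J, I n j q) +
      ∫ x, ∑ n ∈ Finset.range N, ∑ j ∈ Finset.Icc (-(J : ℤ)) J, |u₀ x - v n j| *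
          (ψ (0, x) * (r (n * (lam * h) - 0) * d (x - (2 * j + n) * h))) := by
    rw [integral_finsetSum _ fun n _ => integrable_finsetSum _ fun j _ => hIint n j,
      integral_finsetSum _ fun n _ => integrable_finsetSum _ fun j _ => hinit n j,
      ← Finset.sum_add_distrib]
    refine Finset.sum_nonneg fun n _ => ?_
    rw [integral_finsetSum _ fun j _ => hIint n j, integral_finsetSum _ fun j _ => hinit n j,
      ← Finset.sum_add_distrib]
    exact Finset.sum_nonneg fun j _ => hsite n j
  set K1 : Set (ℝ × ℝ) := Set.Icc 0 T ×ˢ Set.Icc (-X) X with hK1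
  have hK1m : MeasurableSet K1 := measurableSet_Icc.prod measurableSet_Icc
  have hK1c : IsCompact K1 := isCompact_Icc.prod isCompact_Icc
  have hindint : Integrable (K1.indicator fun _ => E) (volume.restrict S) := by
    rw [integrable_indicator_iff hK1m]
    exact integrableOn_const (by
      refine ne_of_lt (lt_of_le_of_lt (Measure.restrict_apply_le _ _) hK1c.measure_lt_top))
  have hindval : ∫ q in S, K1.indicator (fun _ => E) q = E * (T * (2 * X)) := by
    rw [setIntegral_indicator hK1m]
    have : S ∩ K1 = K1 := by
      rw [Set.inter_eq_right]
      intro q hq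
      exact ⟨hq.1.1, trivial⟩
    rw [this, setIntegral_const, hK1, Measure.volume_eq_prod, measureReal_prod_prod,
      Real.volume_real_Icc_of_le hT, Real.volume_real_Icc_of_le (by linarith), smul_eq_mul]
    ring
  have hpt : ∀ q ∈ S, (∑ n ∈ Finset.range N, ∑ j ∈ Finset.Icc (-(J : ℤ)) J, I n j q) +
      (∑ n ∈ Finset.range N,
      ∑ j ∈ Finset.Icc (-(J : ℤ)) J, |u q.1 q.2 - v n j| *
        (G q * (r (n * (lam * h) - q.1) * d (q.2 - (2 * j + n) * h)))) ≤
      K1.indicator (fun _ => E) q := by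
    intro q hq
    have hq0 : 0 ≤ q.1 := hq.1
    have hA : ∀ n j, I n j q + |u q.1 q.2 - v n j| *
        (G q * (r (n * (lam * h) - q.1) * d (q.2 - (2 * j + n) * h))) ≤
        ψ q * (|u q.1 q.2 - v n j| *
          (-(deriv r (n * (lam * h) - q.1) * d (q.2 - (2 * j + n) * h)))
        + kflux f (u q.1 q.2) (v n j) *
          (r (n * (lam * h) - q.1) * deriv d (q.2 - (2 * j + n) * h))) := by
      intro n j
      simp only [I]
      have hκ0 : 0 ≤ r (n * (lam * h) - q.1) * d (q.2 - (2 * j + n) * h) :=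
        mul_nonneg (hr0 _) (hd0 _)
      have h1 := hG q hq0
      have h2 := hFle n j q hq0
      set a := |u q.1 q.2 - v n j|
      have ha : 0 ≤ a := abs_nonneg _
      have h3 : kflux f (u q.1 q.2) (v n j) * ψx q ≤ a * (lam⁻¹ * |ψx q|) := by
        refine (le_abs_self _).trans ?_
        rw [abs_mul]
        calc _ ≤ lam⁻¹ * a * |ψx q| := by gcongr
          _ = _ := by ring
      have h4 : a * ψt q + kflux f (u q.1 q.2) (v n j) * ψx q + a * G q ≤ 0 := by
        nlinarith [mul_le_mul_of_nonneg_left h1 ha]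
      have h5 := mul_nonpos_of_nonpos_of_nonneg h4 hκ0
      nlinarith [h5]
    have hB := Finset.sum_le_sum fun n (_ : n ∈ Finset.range N) =>
      Finset.sum_le_sum fun j (_ : j ∈ Finset.Icc (-(J : ℤ)) J) => hA n j
    simp only [Finset.sum_add_distrib (f := fun j => I _ j q)] at hB
    rw [Finset.sum_add_distrib] at hB
    refine hB.trans ?_
    simp only [← Finset.mul_sum]
    by_cases hq1 : ψ q = 0
    · rw [hq1, zero_mul]
      exact Set.indicator_nonneg (fun _ _ => hE0) q
    · obtain ⟨hqT, hqX⟩ := hsupp q hq0 hq1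
      have hmem : q ∈ K1 := ⟨⟨hq0, hqT⟩, abs_le.1 hqX⟩
      rw [Set.indicator_of_mem hmem]
      have hV := V_ineq f u₀ lam h M C hlam hh hM hC hL hv r d hr0 hd0 hr1 hd1 hrneg hrL hrT hdD
        hdT N J q.1 q.2 (u q.1 q.2) hq0 (hub _ _ hq0) (hN _ hqT) (hJ _ hqX)
      refine (mul_le_mul_of_nonneg_left hV (hψ0 q)).trans ?_
      exact mul_le_of_le_one_left hE0 (hψ1 q)
  have hIs := integrable_finsetSum (Finset.range N) fun n _ =>
    integrable_finsetSum (Finset.Icc (-(J : ℤ)) J) fun j _ => hIint n j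
  have hfin := setIntegral_mono_on (hIs.add hGint) hindint hSm hpt
  rw [hindval] at hfin
  have hadd := integral_add hIs hGint
  simp only [Pi.add_apply] at hfin hadd
  refine ⟨hGint, ?_⟩
  linarith



lemma deriv_glue_pos (x : ℝ) (hx : 0 < x) : 0 < deriv expNegInvGlue x := by
  have h : HasDerivAt expNegInvGlue (Real.exp (-x⁻¹) * (-(-(x ^ 2)⁻¹))) x := by
    have h1 : HasDerivAt (fun y : ℝ => Real.exp (-y⁻¹)) (Real.exp (-x⁻¹) * (-(-(x ^ 2)⁻¹))) x :=
      ((hasDerivAt_inv hx.ne').neg).exp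
    refine h1.congr_of_eventuallyEq ?_
    filter_upwards [lt_mem_nhds hx] with y hy
    simp [expNegInvGlue, not_le.2 hy]
  rw [h.deriv]
  have : 0 < Real.exp (-x⁻¹) := Real.exp_pos _
  rw [neg_neg]
  positivity

lemma glue_le_one (x : ℝ) : expNegInvGlue x ≤ 1 := by
  unfold expNegInvGlue
  split_ifs with h
  · norm_num
  · rw [Real.exp_le_one_iff]
    push Not at h
    have : 0 < x⁻¹ := inv_pos.2 h
    linarith

lemma deriv_glue_nonneg (x : ℝ) : 0 ≤ deriv expNegInvGlue x := by
  rcases le_or_gt x 0 with h | h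
  · have hc : Continuous (deriv expNegInvGlue) :=
      (expNegInvGlue.contDiff (n := 1)).continuous_deriv le_rfl
    rcases h.lt_or_eq with h | h
    · have : deriv expNegInvGlue x = 0 := by
        have h1 : expNegInvGlue =ᶠ[nhds x] fun _ => 0 := by
          filter_upwards [gt_mem_nhds h] with y hy
          exact expNegInvGlue.zero_of_nonpos hy.le
        rw [h1.deriv_eq]; simp
      exact this.ge
    · rw [h]
      have ht : Filter.Tendsto (deriv expNegInvGlue) (nhdsWithin (0:ℝ) (Set.Ioi 0))
          (nhds (deriv expNegInvGlue 0)) :=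
        (hc.tendsto 0).mono_left nhdsWithin_le_nhds
      refine ge_of_tendsto ht ?_
      filter_upwards [self_mem_nhdsWithin] with y hy
      exact (deriv_glue_pos y hy).le
  · exact (deriv_glue_pos x h).le

lemma exists_psi (lam R : ℝ) (hlam : 0 < lam) (hR : 0 < R) :
    ∃ (X η : ℝ) (ψ ψt ψx G : ℝ × ℝ → ℝ), 0 < X ∧ 0 < η ∧
      ContDiff ℝ (⊤ : ℕ∞) ψ ∧ Continuous ψt ∧ Continuous ψx ∧ Continuous G ∧
      (∀ q, 0 ≤ ψ q) ∧ (∀ q, ψ q ≤ 1) ∧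
      (∀ q : ℝ × ℝ, HasDerivAt (fun s => ψ (s, q.2)) (ψt q) q.1) ∧
      (∀ q : ℝ × ℝ, HasDerivAt (fun y => ψ (q.1, y)) (ψx q) q.2) ∧
      (∀ q, 0 ≤ q.1 → ψt q + lam⁻¹ * |ψx q| ≤ - G q) ∧
      (∀ q, 0 ≤ q.1 → ψ q ≠ 0 → q.1 ≤ X ∧ |q.2| ≤ X) ∧
      (∀ q, 0 ≤ G q) ∧ (∀ q ∈ Set.Icc 0 R ×ˢ Set.Icc (-R) R, η ≤ G q) := by
  set c := lam⁻¹ + 1 with hc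
  have hc1 : 1 ≤ c := by have : 0 < lam⁻¹ := inv_pos.2 hlam; linarith
  set X := c * R + √(1 + R ^ 2) + 1 with hX
  have hXpos : 0 < X := by positivity
  let A : ℝ × ℝ → ℝ := fun q => X - c * q.1 - √(1 + q.2 ^ 2)
  have hsq : ∀ y : ℝ, (1 + y ^ 2) ≠ 0 := fun y => by positivity
  have hAs : ContDiff ℝ (⊤ : ℕ∞) A := by
    refine (contDiff_const.sub (contDiff_const.mul contDiff_fst)).sub ?_
    exact ContDiff.sqrt (contDiff_const.add (contDiff_snd.pow 2)) (fun q => hsq q.2)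
  have hg : Differentiable ℝ expNegInvGlue :=
    (expNegInvGlue.contDiff (n := 1)).differentiable (by norm_num)
  have hg' : Continuous (deriv expNegInvGlue) :=
      (expNegInvGlue.contDiff (n := 1)).continuous_deriv le_rfl
  have hGc : Continuous (fun q => deriv expNegInvGlue (A q)) := hg'.comp hAs.continuous
  have hGpos : ∀ q ∈ Set.Icc 0 R ×ˢ Set.Icc (-R) R, 0 < deriv expNegInvGlue (A q) := by
    intro q hq
    apply deriv_glue_pos
    have h1 : c * q.1 ≤ c * R := by have := hq.1.2; gcongr
    have h2 : √(1 + q.2 ^ 2) ≤ √(1 + R ^ 2) := by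
      apply Real.sqrt_le_sqrt
      have := sq_le_sq' hq.2.1 hq.2.2
      linarith
    simp only [A, hX]; linarith
  obtain ⟨q₀, hq₀, hmin⟩ := ((isCompact_Icc (a := (0:ℝ)) (b := R)).prod
    (isCompact_Icc (a := -R) (b := R))).exists_isMinOn
    ⟨(0, 0), ⟨⟨le_rfl, hR.le⟩, ⟨by linarith, hR.le⟩⟩⟩ hGc.continuousOn
  refine ⟨X, deriv expNegInvGlue (A q₀), fun q => expNegInvGlue (A q),
    fun q => deriv expNegInvGlue (A q) * (-c),
    fun q => deriv expNegInvGlue (A q) * (-(q.2 / √(1 + q.2 ^ 2))),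
    fun q => deriv expNegInvGlue (A q), hXpos, hGpos q₀ hq₀, ?_, ?_, ?_, hGc, ?_, ?_, ?_, ?_,
    ?_, ?_, ?_, ?_⟩
  · exact expNegInvGlue.contDiff.comp hAs
  · exact hGc.mul continuous_const
  · refine hGc.mul (Continuous.neg (continuous_snd.div (by fun_prop) fun q => ?_))
    have : 0 < 1 + q.2 ^ 2 := by positivity
    exact (Real.sqrt_pos.2 this).ne'
  · exact fun q => expNegInvGlue.nonneg _
  · exact fun q => glue_le_one _
  · intro q
    have h1 : HasDerivAt (fun s => A (s, q.2)) (-c) q.1 := by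
      have := (((hasDerivAt_id q.1).const_mul c).const_sub X).sub_const (√(1 + q.2 ^ 2))
      simpa [A] using this
    exact (hg (A q)).hasDerivAt.comp q.1 h1
  · intro q
    have h1 : HasDerivAt (fun y => A (q.1, y)) (-(q.2 / √(1 + q.2 ^ 2))) q.2 := by
      have h2 : HasDerivAt (fun y : ℝ => 1 + y ^ 2) (2 * q.2) q.2 := by
        simpa using (hasDerivAt_pow 2 q.2).const_add 1
      have := (h2.sqrt (hsq q.2)).const_sub (X - c * q.1)
      refine this.congr_deriv ?_
      rw [mul_div_mul_left _ _ two_ne_zero]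
    exact (hg (A q)).hasDerivAt.comp q.2 h1
  · intro q _
    have hp : 0 < √(1 + q.2 ^ 2) := Real.sqrt_pos.2 (by positivity)
    have h1 : |(-(q.2 / √(1 + q.2 ^ 2)))| ≤ 1 := by
      rw [abs_neg, abs_div, abs_of_pos hp, div_le_one hp]
      apply Real.abs_le_sqrt; linarith
    have h0 := deriv_glue_nonneg (A q)
    rw [abs_mul, abs_of_nonneg h0]
    have h2 : lam⁻¹ * (deriv expNegInvGlue (A q) * |(-(q.2 / √(1 + q.2 ^ 2)))|) ≤
        lam⁻¹ * (deriv expNegInvGlue (A q) * 1) := by gcongr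
    rw [hc]; nlinarith
  · intro q hq0 hq
    have hA : 0 < A q := by
      by_contra h
      push Not at h
      exact hq (expNegInvGlue.zero_of_nonpos h)
    have h1 : |q.2| ≤ √(1 + q.2 ^ 2) := by apply Real.abs_le_sqrt; linarith
    have h2 : 0 ≤ √(1 + q.2 ^ 2) := Real.sqrt_nonneg _
    have h3 : q.1 ≤ c * q.1 := le_mul_of_one_le_left hq0 hc1
    simp only [A] at hA
    constructor <;> linarith
  · exact fun q => deriv_glue_nonneg _
  · exact fun q hq => hmin hq

lemma exists_bump_r (a : ℝ) (ha : 0 < a) : ∃ r : ℝ → ℝ, ContDiff ℝ (⊤ : ℕ∞) r ∧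
    HasCompactSupport r ∧ (∀ z, 0 ≤ r z) ∧ (∀ z, r z ≤ 1) ∧ (∀ z, z ≤ 0 → r z = 0) ∧
    (∀ z, 3 * a ≤ z → r z = 0) ∧ (∀ z, a ≤ z → z ≤ 2 * a → r z = 1) := by
  let b : ContDiffBump (3 / 2 * a) := ⟨a / 2, 3 / 2 * a, by positivity, by linarith⟩
  refine ⟨b, b.contDiff, b.hasCompactSupport, fun z => b.nonneg, fun z => b.le_one, ?_, ?_, ?_⟩
  · intro z hz
    apply b.zero_of_le_dist
    rw [Real.dist_eq, abs_of_nonpos (by linarith)]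
    show 3 / 2 * a ≤ _
    linarith
  · intro z hz
    apply b.zero_of_le_dist
    rw [Real.dist_eq, abs_of_nonneg (by linarith)]
    show 3 / 2 * a ≤ _
    linarith
  · intro z h1 h2
    apply b.one_of_mem_closedBall
    rw [Metric.mem_closedBall, Real.dist_eq, abs_le]
    show -(a / 2) ≤ _ ∧ _ ≤ a / 2
    constructor <;> linarith

lemma exists_bump_d (a : ℝ) (ha : 0 < a) : ∃ d : ℝ → ℝ, ContDiff ℝ (⊤ : ℕ∞) d ∧
    HasCompactSupport d ∧ (∀ z, 0 ≤ d z) ∧ (∀ z, d z ≤ 1) ∧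
    (∀ z, 2 * a ≤ |z| → d z = 0) ∧ (∀ z, |z| ≤ a → d z = 1) := by
  let b : ContDiffBump (0 : ℝ) := ⟨a, 2 * a, by positivity, by linarith⟩
  refine ⟨b, b.contDiff, b.hasCompactSupport, fun z => b.nonneg, fun z => b.le_one, ?_, ?_⟩
  · intro z hz
    apply b.zero_of_le_dist
    rw [Real.dist_eq, sub_zero]
    exact hz
  · intro z h1
    apply b.one_of_mem_closedBall
    rw [Metric.mem_closedBall, Real.dist_eq, sub_zero]
    exact h1

lemma sum_le_card {ι : Type*} [DecidableEq ι] (S T : Finset ι) (a : ι → ℝ) (ω : ℝ) (hω : 0 ≤ ω)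
    (h1 : ∀ i ∈ T, a i ≤ ω) (h0 : ∀ i, i ∉ T → a i = 0) : ∑ i ∈ S, a i ≤ T.card * ω := by
  have : ∑ i ∈ S, a i = ∑ i ∈ S ∩ T, a i := by
    symm
    apply Finset.sum_subset Finset.inter_subset_left
    intro i hi hi'
    exact h0 i fun h => hi' (Finset.mem_inter.2 ⟨hi, h⟩)
  rw [this]
  calc _ ≤ ∑ i ∈ S ∩ T, ω := Finset.sum_le_sum fun i hi => h1 i (Finset.mem_inter.1 hi).2
    _ = (S ∩ T).card * ω := by simp
    _ ≤ _ := by gcongr; exact Finset.inter_subset_right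



lemma init_sum (v : ℕ → ℤ → ℝ) (P N J : ℕ) (hP : 1 ≤ P) (lam h : ℝ) (hlam : 0 < lam) (hh : 0 < h)
    (r d : ℝ → ℝ) (hr0 : ∀ z, 0 ≤ r z) (hd0 : ∀ z, 0 ≤ d z)
    (hr1 : ∀ z, r z ≤ 1) (hd1 : ∀ z, d z ≤ 1)
    (hr3 : ∀ z, 3 * (lam * (P * h)) ≤ z → r z = 0)
    (hd2 : ∀ z, 2 * (P * h) ≤ |z| → d z = 0) (p c x ω : ℝ) (hω : 0 ≤ ω)
    (hp0 : 0 ≤ p) (hp1 : p ≤ 1)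
    (hclose : ∀ (n : ℕ) (j : ℤ), n < 3 * P → |x - (2 * j + n) * h| < 2 * (P * h) →
      |c - v n j| ≤ ω) :
    ∑ n ∈ Finset.range N, ∑ j ∈ Finset.Icc (-(J : ℤ)) J,
      |c - v n j| * (p * (r (n * (lam * h) - 0) * d (x - (2 * j + n) * h))) ≤ 9 * P ^ 2 * ω := by
  have hP' : (1 : ℝ) ≤ P := by exact_mod_cast hP
  have inner : ∀ n : ℕ, n < 3 * P → ∑ j ∈ Finset.Icc (-(J : ℤ)) J,
      |c - v n j| * (p * (r (n * (lam * h) - 0) * d (x - (2 * j + n) * h))) ≤ 3 * P * ω := by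
    intro n hn
    set i := ⌊(x / h - n) / 2⌋ with hi
    have h1 := Int.floor_le ((x / h - n) / 2)
    have h2 := Int.lt_floor_add_one ((x / h - n) / 2)
    rw [← hi] at h1 h2
    have hx : x = x / h * h := by field_simp
    have := sum_le_card (Finset.Icc (-(J : ℤ)) J) (Finset.Icc (i - P) (i + P))
      (fun j => |c - v n j| * (p * (r (n * (lam * h) - 0) * d (x - (2 * j + n) * h)))) ω hω
      (fun j _ => by
        by_cases hz : 2 * (P * h) ≤ |x - (2 * j + n) * h|
        · rw [hd2 _ hz]; simpa using hω
        · push Not at hz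
          have hcl := hclose n j hn hz
          have h3 : p * (r (n * (lam * h) - 0) * d (x - (2 * j + n) * h)) ≤ 1 :=
            mul_le_one₀ hp1 (mul_nonneg (hr0 _) (hd0 _)) (mul_le_one₀ (hr1 _) (hd0 _) (hd1 _))
          exact (mul_le_of_le_one_right (abs_nonneg _) h3).trans hcl)
      (fun j hj => by
        have hz : 2 * (P * h) ≤ |x - (2 * j + n) * h| := by
          by_contra hz
          push Not at hz
          apply hj
          rw [abs_lt] at hz
          have e : x - (2 * j + n) * h = (x / h - 2 * j - n) * h := by
            rw [sub_mul, sub_mul, ← hx]; ring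
          rw [e] at hz
          have z1 : -(2 * (P : ℝ)) < x / h - 2 * j - n := by
            by_contra hcon; push Not at hcon; nlinarith [hz.1]
          have z2 : x / h - 2 * j - n < 2 * (P : ℝ) := by
            by_contra hcon; push Not at hcon; nlinarith [hz.2]
          rw [Finset.mem_Icc]
          constructor
          · have : ((i - P : ℤ) : ℝ) < j := by push_cast; linarith
            exact le_of_lt (by exact_mod_cast this)
          · have : (j : ℝ) < ((i + P + 1 : ℤ) : ℝ) := by push_cast; linarith
            have : j < i + P + 1 := by exact_mod_cast this
            omega
        rw [hd2 _ hz]; simp)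
    refine this.trans ?_
    have hcard : ((Finset.Icc (i - (P : ℤ)) (i + P)).card : ℝ) = 2 * P + 1 := by
      rw [Int.card_Icc]
      have : (i + P + 1 - (i - (P : ℤ))).toNat = 2 * P + 1 := by omega
      rw [this]; push_cast; ring
    rw [hcard]
    gcongr
    linarith
  have := sum_le_card (Finset.range N) (Finset.range (3 * P)) (fun n => ∑ j ∈ Finset.Icc (-(J : ℤ)) J,
      |c - v n j| * (p * (r (n * (lam * h) - 0) * d (x - (2 * j + n) * h)))) (3 * P * ω)
      (by positivity) (fun n hn => inner n (Finset.mem_range.1 hn))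
      (fun n hn => by
        have hn' : 3 * P ≤ n := by simpa using hn
        have hn2 : (3 : ℝ) * P ≤ n := by exact_mod_cast hn'
        have : r (n * (lam * h) - 0) = 0 := by
          apply hr3
          have : 0 < lam * h := mul_pos hlam hh
          nlinarith
        simp only [this]; simp)
  refine this.trans (le_of_eq ?_)
  rw [Finset.card_range]; push_cast; ring

lemma offset_sum (v : ℕ → ℤ → ℝ) (p N J : ℕ) (lam h : ℝ)
    (hlam : 0 < lam) (hh : 0 < h)
    (r d : ℝ → ℝ) (hr0 : ∀ z, 0 ≤ r z) (hd0 : ∀ z, 0 ≤ d z)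
    (hrone : ∀ z, lam * ((2 * p : ℕ) * h) ≤ z → z ≤ 2 * (lam * ((2 * p : ℕ) * h)) → r z = 1)
    (hdone : ∀ z, |z| ≤ (2 * p : ℕ) * h → d z = 1) (a g t x : ℝ) (ht : 0 ≤ t) (hg : 0 ≤ g)
    (hN : ∀ n : ℕ, N ≤ n → r (n * (lam * h) - t) = 0)
    (hJ : ∀ n : ℕ, n ≤ N → ∀ j : ℤ, (J : ℤ) ≤ |j| → d (x - (2 * j + n) * h) = 0) :
    ∑ o ∈ (Finset.Icc (2 * p + 1) (2 * (2 * p))) ×ˢ (Finset.Icc 1 p),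
      g * |a - v (⌊t / (lam * h)⌋₊ + o.1)
        (⌊(x / h - (⌊t / (lam * h)⌋₊ + o.1 : ℕ)) / 2⌋ + o.2)| ≤
    ∑ n ∈ Finset.range N, ∑ j ∈ Finset.Icc (-(J : ℤ)) J, |a - v n j| *
        (g * (r (n * (lam * h) - t) * d (x - (2 * j + n) * h))) := by
  set m := ⌊t / (lam * h)⌋₊ with hm
  have hτ : 0 < lam * h := mul_pos hlam hh
  have ht' : t = t / (lam * h) * (lam * h) := by field_simp
  have hx' : x = x / h * h := by field_simp
  have m1 := Nat.floor_le (a := t / (lam * h)) (by positivity)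
  have m2 := Nat.lt_floor_add_one (t / (lam * h))
  rw [← hm] at m1 m2
  let e : ℕ × ℕ → ℕ × ℤ := fun o => (m + o.1, ⌊(x / h - (m + o.1 : ℕ)) / 2⌋ + o.2)
  set O := (Finset.Icc (2 * p + 1) (2 * (2 * p))) ×ˢ (Finset.Icc 1 p) with hO
  have hinj : Set.InjOn e O := by
    rintro ⟨o1, o2⟩ _ ⟨o1', o2'⟩ _ h
    simp only [e, Prod.mk.injEq] at h
    obtain ⟨h1, h2⟩ := h
    have h1' : o1 = o1' := by omega
    subst h1'
    have h2' : o2 = o2' := by omega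
    rw [h2']
  have hre : ∀ o ∈ O, r (((e o).1 : ℕ) * (lam * h) - t) = 1 := by
    intro o ho
    rw [hO, Finset.mem_product, Finset.mem_Icc, Finset.mem_Icc] at ho
    have b1 : (2 * p + 1 : ℝ) ≤ o.1 := by exact_mod_cast ho.1.1
    have b2 : (o.1 : ℝ) ≤ 2 * (2 * p) := by exact_mod_cast ho.1.2
    simp only [e]
    push_cast at *
    have e1 : ((m : ℝ) + o.1) * (lam * h) - t = (m + o.1 - t / (lam * h)) * (lam * h) := by
      rw [sub_mul, ← ht']
    apply hrone <;> rw [e1]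
    · have : lam * (2 * p * h) = (2 * p) * (lam * h) := by ring
      rw [this]
      gcongr
      linarith
    · have : 2 * (lam * (2 * p * h)) = (2 * (2 * p)) * (lam * h) := by ring
      rw [this]
      gcongr
      linarith
  have hde : ∀ o ∈ O, d (x - (2 * ((e o).2 : ℤ) + ((e o).1 : ℕ)) * h) = 1 := by
    intro o ho
    rw [hO, Finset.mem_product, Finset.mem_Icc, Finset.mem_Icc] at ho
    have b1 : (1 : ℝ) ≤ o.2 := by exact_mod_cast ho.2.1
    have b2 : (o.2 : ℝ) ≤ p := by exact_mod_cast ho.2.2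
    have h1 := Int.floor_le ((x / h - (m + o.1 : ℕ)) / 2)
    have h2 := Int.lt_floor_add_one ((x / h - (m + o.1 : ℕ)) / 2)
    apply hdone
    simp only [e]
    set i := ⌊(x / h - (m + o.1 : ℕ)) / 2⌋
    push_cast at *
    have e1 : x - (2 * ((i : ℝ) + o.2) + (m + o.1)) * h =
        (x / h - (2 * ((i : ℝ) + o.2) + (m + o.1))) * h := by
      rw [sub_mul, ← hx']
    rw [e1, abs_mul, abs_of_pos hh]
    gcongr
    rw [abs_le]
    constructor <;> linarith
  rw [← Finset.sum_product' (f := fun n j => |a - v n j| *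
        (g * (r (n * (lam * h) - t) * d (x - (2 * j + n) * h))))]
  calc _ = ∑ o ∈ O, (fun s : ℕ × ℤ => |a - v s.1 s.2| *
        (g * (r (s.1 * (lam * h) - t) * d (x - (2 * s.2 + s.1) * h)))) (e o) := by
          refine Finset.sum_congr rfl fun o ho => ?_
          simp only
          rw [hre o ho, hde o ho]
          simp only [e]
          ring
    _ = ∑ s ∈ O.image e, |a - v s.1 s.2| *
        (g * (r (s.1 * (lam * h) - t) * d (x - (2 * s.2 + s.1) * h))) := by
          rw [Finset.sum_image hinj]
    _ ≤ _ := by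
      refine Finset.sum_le_sum_of_subset_of_nonneg ?_ fun s _ _ =>
        mul_nonneg (abs_nonneg _) (mul_nonneg hg (mul_nonneg (hr0 _) (hd0 _)))
      intro s hs
      obtain ⟨o, ho, rfl⟩ := Finset.mem_image.1 hs
      have hn : (e o).1 < N := by
        by_contra hcon
        push Not at hcon
        have := hN _ hcon
        rw [hre o ho] at this
        exact one_ne_zero this
      rw [Finset.mem_product, Finset.mem_range, Finset.mem_Icc]
      refine ⟨hn, ?_⟩
      have hj : |(e o).2| < (J : ℤ) := by
        by_contra hcon
        push Not at hcon
        have := hJ _ hn.le _ hcon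
        rw [hde o ho] at this
        exact one_ne_zero this
      rw [abs_lt] at hj
      constructor <;> linarith


noncomputable def smp (v : ℕ → ℤ → ℝ) (lam h : ℝ) (o : ℕ × ℕ) (t x : ℝ) : ℝ :=
  v (⌊t / (lam * h)⌋₊ + o.1) (⌊(x / h - (⌊t / (lam * h)⌋₊ + o.1 : ℕ)) / 2⌋ + o.2)

lemma smp_meas (v : ℕ → ℤ → ℝ) (lam h : ℝ) (o : ℕ × ℕ) :
    Measurable (Function.uncurry (smp v lam h o)) := by
  have hv : Measurable (Function.uncurry v) := measurable_of_countable _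
  have h1 : Measurable (fun q : ℝ × ℝ => ⌊q.1 / (lam * h)⌋₊ + o.1) :=
    (Nat.measurable_floor.comp (measurable_fst.div_const _)).add_const _
  have h2 : Measurable (fun q : ℝ × ℝ =>
      ⌊(q.2 / h - ((⌊q.1 / (lam * h)⌋₊ + o.1 : ℕ) : ℝ)) / 2⌋ + (o.2 : ℤ)) := by
    refine Measurable.add_const ?_ _
    refine Int.measurable_floor.comp ?_
    refine Measurable.div_const ?_ _
    exact (measurable_snd.div_const _).sub ((measurable_from_top (f := fun n : ℕ => (n : ℝ))).comp h1)
  exact hv.comp (h1.prodMk h2)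

lemma smp_repr (f u₀ : ℝ → ℝ) (hc : Continuous u₀) (lam h M : ℝ) (hlam : 0 < lam) (hh : 0 < h)
    (hB : ∀ x, |u₀ x| ≤ M)
    (hL : ∀ a b, |a| ≤ M → |b| ≤ M → |lam * (f a - f b)| ≤ |a - b|)
    (p : ℕ) (hε : (2 * p : ℕ) * h ≤ 1) (o : ℕ × ℕ)
    (ho : o ∈ (Finset.Icc (2 * p + 1) (2 * (2 * p))) ×ˢ (Finset.Icc 1 p)) (t : ℝ) (ht : 0 ≤ t) :
    ∃ Y : ℝ → ℝ, (∀ x, smp (lf f u₀ lam h) lam h o t x = u₀ (Y x)) ∧ Monotone Y ∧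
      ∀ x, |Y x - x| ≤ lam⁻¹ * t + 3 := by
  set n := ⌊t / (lam * h)⌋₊ + o.1 with hn
  obtain ⟨Y, hY1, hY2, hY3⟩ := lf_repr f u₀ hc lam h M hh hB hL n
  rw [Finset.mem_product, Finset.mem_Icc, Finset.mem_Icc] at ho
  obtain ⟨⟨ho1, ho2⟩, ho3, ho4⟩ := ho
  refine ⟨fun x => Y (⌊(x / h - n) / 2⌋ + o.2), fun x => hY1 _, ?_, fun x => ?_⟩
  · intro x y hxy
    apply hY2
    gcongr
  · have m1 := Nat.floor_le (a := t / (lam * h)) (by positivity)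
    have e1 : ((n : ℕ) : ℝ) * h ≤ lam⁻¹ * t + 2 := by
      have o2' : (o.1 : ℝ) ≤ 2 * (2 * p : ℕ) := by exact_mod_cast ho2
      have : (n : ℝ) ≤ t / (lam * h) + 2 * (2 * p : ℕ) := by
        rw [hn]; push_cast at o2' ⊢; linarith
      calc (n : ℝ) * h ≤ (t / (lam * h) + 2 * (2 * p : ℕ)) * h := by gcongr
        _ = lam⁻¹ * t + 2 * ((2 * p : ℕ) * h) := by field_simp
        _ ≤ _ := by linarith
    set i := ⌊(x / h - n) / 2⌋ with hi
    have h1 := Int.floor_le ((x / h - n) / 2)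
    have h2 := Int.lt_floor_add_one ((x / h - n) / 2)
    rw [← hi] at h1 h2
    have h3 := hY3 (i + o.2)
    have o3 : (1 : ℝ) ≤ o.2 := by exact_mod_cast ho3
    have o4 : (o.2 : ℝ) ≤ p := by exact_mod_cast ho4
    have hx : x = x / h * h := by field_simp
    have e2 : |(2 * ((i + o.2 : ℤ) : ℝ) + n) * h - x| ≤ 1 := by
      have e : (2 * ((i + o.2 : ℤ) : ℝ) + n) * h - x = (2 * i + 2 * o.2 + n - x / h) * h := by
        rw [sub_mul, ← hx]; push_cast; ring
      rw [e, abs_mul, abs_of_pos hh]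
      refine le_trans ?_ hε
      gcongr
      rw [abs_le]; push_cast
      constructor <;> linarith
    calc |Y (i + o.2) - x| = |(Y (i + o.2) - (2 * ((i + o.2 : ℤ) : ℝ) + n) * h) +
          ((2 * ((i + o.2 : ℤ) : ℝ) + n) * h - x)| := by ring_nf
      _ ≤ _ := abs_add_le _ _
      _ ≤ _ := by linarith

lemma level (f u₀ : ℝ → ℝ) (u : ℝ → ℝ → ℝ) (lam M C X η ω ε R : ℝ) (hlam : 0 < lam)
    (hM : 0 ≤ M) (hC : 0 ≤ C) (hX : 0 ≤ X) (hRX : R ≤ X) (hη : 0 < η) (hε : 0 < ε)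
    (hω0 : 0 ≤ ω) (hfc : Continuous f) (hu₀c : Continuous u₀) (hu₀b : ∀ x, |u₀ x| ≤ M)
    (hum : Measurable (Function.uncurry u)) (hub : ∀ t x, 0 ≤ t → |u t x| ≤ M)
    (hK : IsKruzkovSolution f u₀ u)
    (hL : ∀ a b, |a| ≤ M → |b| ≤ M → |lam * (f a - f b)| ≤ |a - b|)
    (hω : ∀ x y, |x| ≤ X → |x - y| ≤ 5 * ε → |u₀ x - u₀ y| ≤ ω)
    (r d : ℝ → ℝ) (hrs : ContDiff ℝ (⊤ : ℕ∞) r) (hds : ContDiff ℝ (⊤ : ℕ∞) d)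
    (hrc : HasCompactSupport r) (hdc : HasCompactSupport d)
    (hr0 : ∀ z, 0 ≤ r z) (hd0 : ∀ z, 0 ≤ d z)
    (hr1 : ∀ z, r z ≤ 1) (hd1 : ∀ z, d z ≤ 1) (hrneg : ∀ z, z ≤ 0 → r z = 0)
    (hr3 : ∀ z, 3 * (lam * ε) ≤ z → r z = 0)
    (hrone : ∀ z, lam * ε ≤ z → z ≤ 2 * (lam * ε) → r z = 1)
    (hd2 : ∀ z, 2 * ε ≤ |z| → d z = 0) (hdone : ∀ z, |z| ≤ ε → d z = 1)
    (hrL : ∀ z h, |r (z + h) - r z| ≤ C * |h|)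
    (hrT : ∀ z h, |r (z + h) - r z - h * deriv r z| ≤ C * h ^ 2)
    (hdD : ∀ z, |deriv d z| ≤ C)
    (hdT : ∀ z h, |d (z + h) - d z - h * deriv d z| ≤ C * h ^ 2)
    (ψ ψt ψx G : ℝ × ℝ → ℝ) (hψs : ContDiff ℝ (⊤ : ℕ∞) ψ) (hψtc : Continuous ψt)
    (hψxc : Continuous ψx) (hGc : Continuous G)
    (hψ0 : ∀ q, 0 ≤ ψ q) (hψ1 : ∀ q, ψ q ≤ 1)
    (hψt : ∀ q : ℝ × ℝ, HasDerivAt (fun s => ψ (s, q.2)) (ψt q) q.1)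
    (hψx : ∀ q : ℝ × ℝ, HasDerivAt (fun y => ψ (q.1, y)) (ψx q) q.2)
    (hG : ∀ q, 0 ≤ q.1 → ψt q + lam⁻¹ * |ψx q| ≤ - G q)
    (hsupp : ∀ q, 0 ≤ q.1 → ψ q ≠ 0 → q.1 ≤ X ∧ |q.2| ≤ X)
    (hG0 : ∀ q, 0 ≤ G q) (hGη : ∀ q ∈ Set.Icc 0 R ×ˢ Set.Icc (-R) R, η ≤ G q)
    (c1 c2 : ℕ) (hc1 : X + 3 * (lam * ε) ≤ c1 * (lam * ε)) (hc2 : X + 2 * ε ≤ c2 * ε)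
    (hc12 : c1 ≤ c2) (hc2' : 1 ≤ c2)
    (p : ℕ) (hp : 1 ≤ p) :
    ∑ o ∈ (Finset.Icc (2 * p + 1) (2 * (2 * p))) ×ˢ (Finset.Icc 1 p),
      η * ∫ q in Set.Icc 0 R ×ˢ Set.Icc (-R) R,
        |u q.1 q.2 - smp (lf f u₀ lam (ε / (2 * p : ℕ))) lam (ε / (2 * p : ℕ)) o q.1 q.2| ≤
    3 * c1 * c2 * ((2 * p : ℕ) : ℝ) * (ε * (2 * M * (C * lam ^ 2 + 2 * C + C ^ 2 * lam) / lam))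
      * (X * (2 * X)) + 9 * ((2 * p : ℕ) : ℝ) ^ 2 * ω * (2 * X) := by
  set P := 2 * p with hP
  have hP1 : 1 ≤ P := by omega
  have hPR : (1 : ℝ) ≤ P := by exact_mod_cast hP1
  set h := ε / (P : ℝ) with hh'
  have hh : 0 < h := by positivity
  have hPh : (P : ℝ) * h = ε := by rw [hh']; field_simp
  set O := (Finset.Icc (P + 1) (2 * P)) ×ˢ (Finset.Icc 1 p) with hO
  have hv : ∀ n j, |lf f u₀ lam h n j| ≤ M := by
    intro n j
    obtain ⟨Y, hY, -, -⟩ := lf_repr f u₀ hu₀c lam h M hh hu₀b hL n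
    rw [hY]; exact hu₀b _
  set N := c1 * P with hNdef
  set J := c2 * P with hJdef
  have hNh : (N : ℝ) * h = c1 * ε := by rw [hNdef]; push_cast; rw [mul_assoc, hPh]
  have hJh : (J : ℝ) * h = c2 * ε := by rw [hJdef]; push_cast; rw [mul_assoc, hPh]
  have hNJ : N ≤ J := Nat.mul_le_mul_right _ hc12
  have hNn : ∀ t, t ≤ X → ∀ n : ℕ, N ≤ n → r (n * (lam * h) - t) = 0 := by
    intro t ht n hn
    apply hr3
    have hn' : (N : ℝ) ≤ n := by exact_mod_cast hn
    have : c1 * (lam * ε) ≤ n * (lam * h) := by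
      calc c1 * (lam * ε) = N * (lam * h) := by
            rw [show (N : ℝ) * (lam * h) = lam * (N * h) by ring, hNh]; ring
        _ ≤ _ := by gcongr
    linarith
  have hJ : ∀ x, |x| ≤ X → ∀ n : ℕ, n ≤ N → ∀ j : ℤ, (J : ℤ) ≤ |j| →
      d (x - (2 * j + n) * h) = 0 := by
    intro x hx n hn j hj
    apply hd2
    have hn' : (n : ℝ) ≤ J := by exact_mod_cast hn.trans hNJ
    have hj' : (J : ℝ) ≤ |(j : ℝ)| := by exact_mod_cast hj
    have hn0 : (0 : ℝ) ≤ n := Nat.cast_nonneg n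
    have hJ0 : (0 : ℝ) ≤ J := Nat.cast_nonneg J
    have h1 : (J : ℝ) ≤ |2 * (j : ℝ) + n| := by
      rcases abs_cases (j : ℝ) with ⟨e, _⟩ | ⟨e, _⟩ <;> rw [e] at hj'
      · rw [abs_of_nonneg (by linarith)]; linarith
      · rw [abs_of_nonpos (by linarith)]; linarith
    have h2 : (J : ℝ) * h ≤ |(2 * (j : ℝ) + n) * h| := by
      rw [abs_mul, abs_of_pos hh]; gcongr
    rw [hJh] at h2
    have h3 := abs_sub_abs_le_abs_sub ((2 * (j : ℝ) + n) * h) x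
    rw [abs_sub_comm] at h3
    linarith
  obtain ⟨hSint, hmain⟩ := U_ineq f u₀ u lam h M C X X hlam hh hM hC hX hX hfc hu₀c.measurable hu₀b
    hum hub hK hL hv r d hrs hds hrc hdc hr0 hd0 hr1 hd1 hrneg hrL hrT hdD hdT N J
    (fun t ht => hNn t ht N le_rfl) hJ ψ ψt ψx G hψs hψtc hψxc hGc hψ0 hψ1 hψt hψx hG hsupp
  set v := lf f u₀ lam h with hvdef
  set K : Set (ℝ × ℝ) := Set.Icc 0 R ×ˢ Set.Icc (-R) R with hKdef
  have hKm : MeasurableSet K := measurableSet_Icc.prod measurableSet_Icc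
  have hKfin : volume K ≠ ⊤ := (isCompact_Icc.prod isCompact_Icc).measure_lt_top.ne
  have hum' : Measurable (fun q : ℝ × ℝ => u q.1 q.2) := hum
  have hIo : ∀ o, IntegrableOn (fun q : ℝ × ℝ => |u q.1 q.2 - smp v lam h o q.1 q.2|) K := by
    intro o
    have hs : Measurable (fun q : ℝ × ℝ => smp v lam h o q.1 q.2) := smp_meas v lam h o
    refine Measure.integrableOn_of_bounded (M := 2 * M) hKfin
      (continuous_abs.measurable.comp (hum'.sub hs)).aestronglyMeasurable ?_
    refine (ae_restrict_iff' hKm).2 (Filter.Eventually.of_forall fun q hq => ?_)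
    rw [Real.norm_eq_abs, abs_abs]
    have a1 := hub q.1 q.2 hq.1.1
    have a2 : |smp v lam h o q.1 q.2| ≤ M := hv _ _
    linarith [abs_sub (u q.1 q.2) (smp v lam h o q.1 q.2)]
  set S : ℝ × ℝ → ℝ := fun q => ∑ n ∈ Finset.range N,
      ∑ j ∈ Finset.Icc (-(J : ℤ)) J, |u q.1 q.2 - v n j| *
        (G q * (r (n * (lam * h) - q.1) * d (q.2 - (2 * j + n) * h))) with hS
  have hS0 : ∀ q, 0 ≤ S q := fun q => Finset.sum_nonneg fun n _ => Finset.sum_nonneg fun j _ =>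
    mul_nonneg (abs_nonneg _) (mul_nonneg (hG0 q) (mul_nonneg (hr0 _) (hd0 _)))
  have hsub : K ⊆ Set.Ici (0:ℝ) ×ˢ (Set.univ : Set ℝ) := fun q hq => ⟨hq.1.1, trivial⟩
  have step1 : ∑ o ∈ O, η * ∫ q in K, |u q.1 q.2 - smp v lam h o q.1 q.2| ≤
      ∫ q in Set.Ici (0:ℝ) ×ˢ (Set.univ : Set ℝ), S q := by
    calc ∑ o ∈ O, η * ∫ q in K, |u q.1 q.2 - smp v lam h o q.1 q.2|
        = ∫ q in K, ∑ o ∈ O, η * |u q.1 q.2 - smp v lam h o q.1 q.2| := by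
          rw [integral_finsetSum]
          · simp_rw [integral_const_mul]
          · intro o _; exact (hIo o).const_mul η
      _ ≤ ∫ q in K, S q := by
          refine setIntegral_mono_on ?_ (hSint.mono_set hsub) hKm ?_
          · exact integrable_finsetSum _ fun o _ => (hIo o).const_mul η
          · intro q hq
            have hqx : |q.2| ≤ X := (abs_le.2 hq.2).trans hRX
            have := offset_sum v p N J lam h hlam hh r d hr0 hd0
              (by rw [← hP, hPh]; exact hrone) (by rw [← hP, hPh]; exact hdone)
              (u q.1 q.2) (G q) q.1 q.2 hq.1.1 (hG0 q) (hNn q.1 (hq.1.2.trans hRX))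
              (hJ q.2 hqx)
            refine le_trans ?_ this
            refine Finset.sum_le_sum fun o _ => ?_
            exact mul_le_mul_of_nonneg_right (hGη q hq) (abs_nonneg _)
      _ ≤ _ := setIntegral_mono_set hSint (Filter.Eventually.of_forall hS0)
          (Filter.Eventually.of_forall hsub)
  refine step1.trans (hmain.trans ?_)
  have stepI : ∫ x, ∑ n ∈ Finset.range N, ∑ j ∈ Finset.Icc (-(J : ℤ)) J,
        |u₀ x - v n j| *
          (ψ (0, x) * (r (n * (lam * h) - 0) * d (x - (2 * j + n) * h))) ≤
      9 * (P : ℝ) ^ 2 * ω * (2 * X) := by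
    have e : ∫ x, (Set.Icc (-X) X).indicator (fun _ => 9 * (P : ℝ) ^ 2 * ω) x =
        9 * (P : ℝ) ^ 2 * ω * (2 * X) := by
      rw [integral_indicator measurableSet_Icc, setIntegral_const, smul_eq_mul, Measure.real,
        Real.volume_Icc, ENNReal.toReal_ofReal (by linarith)]
      ring
    rw [← e]
    refine integral_mono_of_nonneg (Filter.Eventually.of_forall fun x => ?_) ?_
      (Filter.Eventually.of_forall fun x => ?_)
    · exact Finset.sum_nonneg fun n _ => Finset.sum_nonneg fun j _ =>
        mul_nonneg (abs_nonneg _) (mul_nonneg (hψ0 _) (mul_nonneg (hr0 _) (hd0 _)))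
    · rw [integrable_indicator_iff measurableSet_Icc]
      exact integrableOn_const (by simp)
    · by_cases hx : x ∈ Set.Icc (-X) X
      · rw [Set.indicator_of_mem hx]
        refine init_sum v P N J hP1 lam h hlam hh r d hr0 hd0 hr1 hd1
          (by rw [hPh]; exact hr3) (by rw [hPh]; exact hd2) (ψ (0, x)) (u₀ x) x ω hω0
          (hψ0 _) (hψ1 _) ?_
        intro n j hn hxj
        obtain ⟨Y, hY1, -, hY3⟩ := lf_repr f u₀ hu₀c lam h M hh hu₀b hL n
        rw [hvdef, hY1]
        apply hω _ _ (abs_le.2 hx)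
        have hn' : (n : ℝ) ≤ 3 * P := by exact_mod_cast hn.le
        have : (n : ℝ) * h ≤ 3 * ε := by
          calc (n : ℝ) * h ≤ 3 * P * h := by gcongr
            _ = _ := by rw [mul_assoc, hPh]
        rw [hPh] at hxj
        calc |x - Y j| = |(x - (2 * j + n) * h) - (Y j - (2 * j + n) * h)| := by ring_nf
          _ ≤ _ := abs_sub _ _
          _ ≤ _ := by linarith [hY3 j]
      · rw [Set.indicator_of_notMem hx]
        have : ψ (0, x) = 0 := by
          by_contra hne
          exact hx (abs_le.1 (hsupp (0, x) le_rfl hne).2)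
        simp [this]
  refine add_le_add ?_ stepI
  refine mul_le_mul_of_nonneg_right ?_ (by positivity)
  have hJ1 : (2 * (J : ℝ) + 1) ≤ 3 * J := by
    have : 1 ≤ J := Nat.mul_pos hc2' hP1
    have : (1 : ℝ) ≤ J := by exact_mod_cast this
    linarith
  set D := 2 * M * (C * lam ^ 2 + 2 * C + C ^ 2 * lam) / lam with hD
  have hD0 : 0 ≤ D := by positivity
  calc (N : ℝ) * (2 * J + 1) * (h * D) ≤ N * (3 * J) * (h * D) := by gcongr
    _ = 3 * N * (J * h) * D := by ring
    _ = _ := by rw [hJh, hNdef]; push_cast; ring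


lemma approx (f u₀ : ℝ → ℝ) (u : ℝ → ℝ → ℝ) (lam M R κ : ℝ) (hlam : 0 < lam)
    (hM : 0 ≤ M) (hR : 0 < R) (hκ : 0 < κ)
    (hfc : Continuous f) (hu₀c : Continuous u₀) (hu₀b : ∀ x, |u₀ x| ≤ M)
    (hum : Measurable (Function.uncurry u)) (hub : ∀ t x, 0 ≤ t → |u t x| ≤ M)
    (hK : IsKruzkovSolution f u₀ u)
    (hL : ∀ a b, |a| ≤ M → |b| ≤ M → |lam * (f a - f b)| ≤ |a - b|) :
    ∃ w : ℝ → ℝ → ℝ, Measurable (Function.uncurry w) ∧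
      (∀ t, 0 ≤ t → ∃ Y : ℝ → ℝ, (∀ x, w t x = u₀ (Y x)) ∧ Monotone Y ∧
        ∀ x, |Y x - x| ≤ lam⁻¹ * t + 3) ∧
      ∫ q in Set.Icc 0 R ×ˢ Set.Icc (-R) R, |u q.1 q.2 - w q.1 q.2| ≤ κ := by
  obtain ⟨X0, η, ψ, ψt, ψx, G, hX0, hη, hψs, hψtc, hψxc, hGc, hψ0, hψ1, hψt, hψx, hG, hsupp0, hG0,
    hGη⟩ := exists_psi lam R hlam hR
  set X := max X0 R with hXdef
  have hX : 0 < X := lt_max_of_lt_left hX0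
  have hRX : R ≤ X := le_max_right _ _
  have hsupp : ∀ q : ℝ × ℝ, 0 ≤ q.1 → ψ q ≠ 0 → q.1 ≤ X ∧ |q.2| ≤ X := fun q h1 h2 =>
    ⟨(hsupp0 q h1 h2).1.trans (le_max_left _ _), (hsupp0 q h1 h2).2.trans (le_max_left _ _)⟩
  set ω := κ * η / (72 * X) with hωdef
  have hω0 : 0 < ω := by positivity
  have huc := isCompact_Icc.uniformContinuousOn_of_continuous
    (s := Set.Icc (-X - 5) (X + 5)) hu₀c.continuousOn
  obtain ⟨δ, hδ, hδ'⟩ := Metric.uniformContinuousOn_iff.1 huc ω hω0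
  set ε := min 1 (δ / 6) with hεdef
  have hε : 0 < ε := by positivity
  have hε1 : ε ≤ 1 := min_le_left _ _
  have hε2 : ε ≤ δ / 6 := min_le_right _ _
  have hω : ∀ x y, |x| ≤ X → |x - y| ≤ 5 * ε → |u₀ x - u₀ y| ≤ ω := by
    intro x y hx hxy
    rw [abs_le] at hx
    have hxy' := abs_le.1 hxy
    have := hδ' x ⟨by linarith, by linarith⟩ y ⟨by linarith, by linarith⟩
      (by rw [Real.dist_eq]; linarith)
    rw [Real.dist_eq] at this
    exact this.le
  obtain ⟨r, hrs, hrc, hr0, hr1, hrneg, hr3, hrone⟩ := exists_bump_r (lam * ε) (by positivity)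
  obtain ⟨d, hds, hdc, hd0, hd1, hd2, hdone⟩ := exists_bump_d ε hε
  obtain ⟨C1, hC1, -, hrL, hrT⟩ := taylor_bump r hrs hrc
  obtain ⟨C2, hC2, hdD, -, hdT⟩ := taylor_bump d hds hdc
  set C := max C1 C2 with hCdef
  have hCl : C1 ≤ C := le_max_left _ _
  have hCr : C2 ≤ C := le_max_right _ _
  have hC : 0 ≤ C := hC1.trans hCl
  set c1 := ⌈X / (lam * ε)⌉₊ + 3 with hc1def
  set c2 := ⌈X / ε⌉₊ + 2 + c1 with hc2def
  have hle : 0 < lam * ε := by positivity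
  have hc1 : X + 3 * (lam * ε) ≤ c1 * (lam * ε) := by
    have := Nat.le_ceil (X / (lam * ε))
    rw [div_le_iff₀ hle] at this
    rw [hc1def]; push_cast; linarith
  have hc2 : X + 2 * ε ≤ c2 * ε := by
    have := Nat.le_ceil (X / ε)
    rw [div_le_iff₀ hε] at this
    have h0 : (0 : ℝ) ≤ c1 * ε := by positivity
    rw [hc2def]; push_cast; linarith
  set A := 3 * c1 * c2 * (ε * (2 * M * (C * lam ^ 2 + 2 * C + C ^ 2 * lam) / lam))
      * (X * (2 * X)) with hA
  have hA0 : 0 ≤ A := by positivity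
  obtain ⟨p0, hp0⟩ := exists_nat_ge (4 * A / (κ * η))
  set p := p0 + 1 with hp
  have hpA : 4 * A ≤ κ * η * (2 * p : ℕ) := by
    rw [div_le_iff₀ (by positivity)] at hp0
    have : κ * η * p0 ≤ κ * η * (2 * p : ℕ) := by
      gcongr
      omega
    linarith
  have main := level f u₀ u lam M C X η ω ε R hlam hM hC hX.le hRX hη hε hω0.le hfc hu₀c hu₀b hum
    hub hK hL hω r d hrs hds hrc hdc hr0 hd0 hr1 hd1 hrneg hr3 hrone hd2 hdone
    (fun z h => (hrL z h).trans (by gcongr)) (fun z h => (hrT z h).trans (by gcongr))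
    (fun z => (hdD z).trans hCr) (fun z h => (hdT z h).trans (by gcongr))
    ψ ψt ψx G hψs hψtc hψxc hGc hψ0 hψ1 hψt hψx hG hsupp hG0 hGη c1 c2 hc1 hc2 (by omega)
    (by omega) p (by omega)
  set P : ℝ := ((2 * p : ℕ) : ℝ) with hP
  set h := ε / P with hh'
  have hP0 : 0 < P := by rw [hP]; positivity
  have hh : 0 < h := by positivity
  set O := (Finset.Icc (2 * p + 1) (2 * (2 * p))) ×ˢ (Finset.Icc 1 p) with hO
  have hcard : (O.card : ℝ) = P * P / 2 := by
    rw [hO, Finset.card_product, Nat.card_Icc, Nat.card_Icc, hP]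
    have : 2 * (2 * p) + 1 - (2 * p + 1) = 2 * p := by omega
    rw [this]
    push_cast
    ring
  have hex : ∃ o ∈ O, ∫ q in Set.Icc 0 R ×ˢ Set.Icc (-R) R,
      |u q.1 q.2 - smp (lf f u₀ lam h) lam h o q.1 q.2| ≤ κ := by
    by_contra hcon
    push Not at hcon
    have hne : O.Nonempty := by
      rw [← Finset.card_pos]
      have : (0 : ℝ) < O.card := by rw [hcard]; positivity
      exact_mod_cast this
    have h1 : ∑ o ∈ O, η * κ < ∑ o ∈ O, η * ∫ q in Set.Icc 0 R ×ˢ Set.Icc (-R) R,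
        |u q.1 q.2 - smp (lf f u₀ lam h) lam h o q.1 q.2| :=
      Finset.sum_lt_sum_of_nonempty hne fun o ho => mul_lt_mul_of_pos_left (hcon o ho) hη
    rw [Finset.sum_const, nsmul_eq_mul, hcard] at h1
    have h2 := h1.trans_le main
    have h3 : 9 * P ^ 2 * ω * (2 * X) = P * P * (κ * η) / 4 := by
      rw [hωdef]; field_simp; ring
    have h4 : 3 * c1 * c2 * P * (ε * (2 * M * (C * lam ^ 2 + 2 * C + C ^ 2 * lam) / lam))
      * (X * (2 * X)) = A * P := by rw [hA]; ring
    rw [h3, h4] at h2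
    nlinarith
  obtain ⟨o, ho, hoκ⟩ := hex
  refine ⟨smp (lf f u₀ lam h) lam h o, smp_meas _ _ _ _, fun t ht => ?_, hoκ⟩
  refine smp_repr f u₀ hu₀c lam h M hlam hh hu₀b hL p ?_ o ho t ht
  rw [hh', ← hP]
  rw [mul_div_cancel₀ _ hP0.ne']
  exact hε1

lemma exists_alpha (f u₀ : ℝ → ℝ) (u : ℝ → ℝ → ℝ) (lam M : ℝ) (hlam : 0 < lam)
    (hM : 0 ≤ M)
    (hfc : Continuous f) (hu₀c : Continuous u₀) (hu₀b : ∀ x, |u₀ x| ≤ M)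
    (hum : Measurable (Function.uncurry u)) (hub : ∀ t x, 0 ≤ t → |u t x| ≤ M)
    (hK : IsKruzkovSolution f u₀ u)
    (hL : ∀ a b, |a| ≤ M → |b| ≤ M → |lam * (f a - f b)| ≤ |a - b|) :
    ∃ α : ℝ → ℝ → ℝ, (∀ᵐ q : ℝ × ℝ, 0 ≤ q.1 → u q.1 q.2 = u₀ (α q.1 q.2)) ∧
      (∀ t, 0 ≤ t → Monotone (α t)) := by
  have hw := fun m : ℕ => approx f u₀ u lam M (m + 1) ((1 / 2 : ℝ) ^ m) hlam hM (by positivity)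
    (by positivity) hfc hu₀c hu₀b hum hub hK hL
  choose w hwm hwY hwI using hw
  choose Y hY1 hY2 hY3 using hwY
  have hcpt : ∀ t (ht : 0 ≤ t) x, ∃ a : ℝ, Filter.Tendsto (fun m => Y m t ht x)
      (Filter.hyperfilter ℕ : Filter ℕ) (nhds a) := by
    intro t ht x
    have hc : IsCompact (Set.Icc (x - (lam⁻¹ * t + 3)) (x + (lam⁻¹ * t + 3))) := isCompact_Icc
    obtain ⟨a, -, ha⟩ := hc.ultrafilter_le_nhds
      ((Filter.hyperfilter ℕ).map (fun m => Y m t ht x)) (by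
        rw [Filter.le_principal_iff, Ultrafilter.mem_coe, Ultrafilter.mem_map]
        refine Filter.univ_mem' fun m => ?_
        have := abs_le.1 (hY3 m t ht x)
        exact ⟨by linarith, by linarith⟩)
    exact ⟨a, ha⟩
  choose a ha using hcpt
  classical
  refine ⟨fun t x => if ht : 0 ≤ t then a t ht x else 0, ?_, fun t ht x y hxy => ?_⟩
  · -- a.e. convergence
    let K : ℕ → Set (ℝ × ℝ) := fun m => Set.Icc 0 ((m : ℝ) + 1) ×ˢ Set.Icc (-((m : ℝ) + 1)) (m + 1)
    have hKm : ∀ m, MeasurableSet (K m) := fun m => measurableSet_Icc.prod measurableSet_Icc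
    let F : ℕ → ℝ × ℝ → ℝ≥0∞ := fun m =>
      (K m).indicator fun q => ENNReal.ofReal |u q.1 q.2 - w m q.1 q.2|
    have hum' : Measurable (fun q : ℝ × ℝ => u q.1 q.2) := hum
    have hwm' : ∀ m, Measurable (fun q : ℝ × ℝ => w m q.1 q.2) := hwm
    have habs : ∀ m, Measurable (fun q : ℝ × ℝ => |u q.1 q.2 - w m q.1 q.2|) := fun m =>
      continuous_abs.measurable.comp (hum'.sub (hwm' m))
    have hFm : ∀ m, Measurable (F m) := fun m =>
      (ENNReal.measurable_ofReal.comp (habs m)).indicator (hKm m)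
    have hFI : ∀ m, ∫⁻ q, F m q ≤ ENNReal.ofReal ((1 / 2 : ℝ) ^ m) := by
      intro m
      rw [lintegral_indicator (hKm m), ← ofReal_integral_eq_lintegral_ofReal]
      · exact ENNReal.ofReal_le_ofReal (hwI m)
      · refine Measure.integrableOn_of_bounded (M := 2 * M)
          (isCompact_Icc.prod isCompact_Icc).measure_lt_top.ne
          (habs m).aestronglyMeasurable ?_
        refine (ae_restrict_iff' (hKm m)).2 (Filter.Eventually.of_forall fun q hq => ?_)
        rw [Real.norm_eq_abs, abs_abs]
        have a1 := hub q.1 q.2 hq.1.1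
        have a2 : |w m q.1 q.2| ≤ M := by rw [hY1 m q.1 hq.1.1]; exact hu₀b _
        linarith [abs_sub (u q.1 q.2) (w m q.1 q.2)]
      · exact Filter.Eventually.of_forall fun q => abs_nonneg _
    have hsum : ∫⁻ q, ∑' m, F m q ≠ ⊤ := by
      rw [lintegral_tsum fun m => (hFm m).aemeasurable]
      refine ne_top_of_le_ne_top ?_ (ENNReal.tsum_le_tsum hFI)
      rw [← ENNReal.ofReal_tsum_of_nonneg (fun m => by positivity) summable_geometric_two]
      exact ENNReal.ofReal_ne_top
    have hae := ae_lt_top (Measurable.tsum hFm) hsum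
    filter_upwards [hae] with q hq ht
    have ht0 := ENNReal.tendsto_atTop_zero_of_tsum_ne_top hq.ne
    have hev : ∀ᶠ m : ℕ in Filter.atTop, F m q = ENNReal.ofReal |u q.1 q.2 - w m q.1 q.2| := by
      obtain ⟨m0, hm0⟩ := exists_nat_ge (max q.1 |q.2|)
      filter_upwards [Filter.eventually_ge_atTop m0] with m hm
      have hm' : (m0 : ℝ) ≤ m := by exact_mod_cast hm
      have h1 := (le_max_left q.1 |q.2|).trans hm0
      have h2 := abs_le.1 ((le_max_right q.1 |q.2|).trans hm0)
      apply Set.indicator_of_mem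
      exact ⟨⟨ht, by linarith⟩, ⟨by linarith, by linarith⟩⟩
    have ht1 := ht0.congr' hev
    have ht2 : Filter.Tendsto (fun m => |u q.1 q.2 - w m q.1 q.2|) Filter.atTop (nhds 0) := by
      have := (ENNReal.tendsto_toReal ENNReal.zero_ne_top).comp ht1
      simpa [Function.comp_def, ENNReal.toReal_ofReal] using this
    have ht3 : Filter.Tendsto (fun m => w m q.1 q.2) Filter.atTop (nhds (u q.1 q.2)) := by
      rw [tendsto_iff_dist_tendsto_zero]
      simpa [Real.dist_eq, abs_sub_comm] using ht2
    have ht4 : Filter.Tendsto (fun m => w m q.1 q.2) (Filter.hyperfilter ℕ : Filter ℕ)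
        (nhds (u q.1 q.2)) := ht3.mono_left Nat.hyperfilter_le_atTop
    have ht5 : Filter.Tendsto (fun m => w m q.1 q.2) (Filter.hyperfilter ℕ : Filter ℕ)
        (nhds (u₀ (a q.1 ht q.2))) := by
      have := (hu₀c.tendsto _).comp (ha q.1 ht q.2)
      refine this.congr fun m => ?_
      exact (hY1 m q.1 ht q.2).symm
    simp only [dif_pos ht]
    exact tendsto_nhds_unique ht4 ht5
  · simp only [dif_pos ht]
    exact le_of_tendsto_of_tendsto' (ha t ht x) (ha t ht y) fun m => hY2 m t ht hxy


lemma bv_case (g : ℝ → ℝ) (hm : Measurable g) (hv : eVariationOn g Set.univ ≠ ⊤) (a b : ℝ) :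
    IntervalIntegrable g volume a b := by
  rw [intervalIntegrable_iff]
  refine Measure.integrableOn_of_bounded (M := |g 0| + (eVariationOn g Set.univ).toReal) (by simp)
    hm.aestronglyMeasurable (Filter.Eventually.of_forall fun x => ?_)
  have h1 := eVariationOn.edist_le g (Set.mem_univ x) (Set.mem_univ (0 : ℝ))
  have h2 : dist (g x) (g 0) ≤ (eVariationOn g Set.univ).toReal := by
    rw [dist_edist]; exact ENNReal.toReal_mono hv h1
  rw [Real.dist_eq] at h2
  rw [Real.norm_eq_abs]
  linarith [abs_sub_abs_le_abs_sub (g x) (g 0)]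

lemma lp_case (g : ℝ → ℝ) (hm : Measurable g) (p : ℝ≥0∞) (hp : 1 < p)
    (hv : eLpNorm g p volume ≠ ⊤) (a b : ℝ) :
    IntervalIntegrable g volume a b := by
  have : MemLp g p volume := ⟨hm.aestronglyMeasurable, lt_top_iff_ne_top.2 hv⟩
  rw [intervalIntegrable_iff]
  exact ((this.locallyIntegrable hp.le).integrableOn_isCompact isCompact_uIcc).mono_set
    Set.uIoc_subset_uIcc

lemma holder_case (U g : ℝ → ℝ) (hm : Measurable g) (p : ℝ≥0∞) (hp : 1 < p)
    (hv : eLpNorm g p volume ≠ ⊤) (hU : ∀ a b : ℝ, U b - U a = ∫ s in a..b, g s) :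
    ∃ (Ch γ : NNReal), 0 < γ ∧ HolderWith Ch γ U := by
  have hγ : 0 < 1 - 1 / p.toReal := by
    by_cases ht : p = ⊤
    · simp [ht]
    · have : 1 < p.toReal := by
        rw [← ENNReal.toReal_one]
        exact (ENNReal.toReal_lt_toReal ENNReal.one_ne_top ht).2 hp
      have := (div_lt_one (by linarith)).2 this
      linarith
  refine ⟨(eLpNorm g p volume).toNNReal, ⟨1 - 1 / p.toReal, hγ.le⟩, hγ, fun x y => ?_⟩
  rw [ENNReal.coe_toNNReal hv, edist_comm, edist_eq_enorm_sub, hU x y]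
  have h1 : ‖∫ s in x..y, g s‖ₑ ≤ ∫⁻ s in Set.uIoc x y, ‖g s‖ₑ := by
    rw [← enorm_norm, intervalIntegral.norm_intervalIntegral_eq, enorm_norm]
    exact enorm_integral_le_lintegral_enorm _
  refine h1.trans ?_
  rw [← eLpNorm_one_eq_lintegral_enorm]
  refine (eLpNorm_le_eLpNorm_mul_rpow_measure_univ hp.le hm.aestronglyMeasurable).trans ?_
  have h2 : (volume.restrict (Set.uIoc x y)) Set.univ = edist x y := by
    rw [Measure.restrict_apply_univ, Real.volume_uIoc, edist_dist, Real.dist_eq, abs_sub_comm]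
  rw [h2]
  refine mul_le_mul' (eLpNorm_mono_measure _ Measure.restrict_le_self) (le_of_eq ?_)
  rw [ENNReal.toReal_one, div_one]
  rfl


/-- Generalized persistence for a scalar conservation law:
the Kruzkov entropy solution `u` with `u₀ ∈ L^∞` can be represented as
`u(t,x) = U(t, α(t,x))` with `α(t,·)` locally bounded and monotone increasing,
and `U(t,·)` satisfies `|∂_α U(t,·)|_{BV} ≤ |u₀'|_{BV}` and, for every
`1 < p ≤ ∞`, `|∂_α U(t,·)|_{L^p} ≤ |u₀'|_{L^p}` whenever the right-hand sides
are finite; in the latter case `U(t,·)` is Hölder continuous. (Here `∂_α U(t,·)`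
is realized as a function `g` with `U(t,b) - U(t,a) = ∫_a^b g`.) -/
theorem stmt1
    (f : ℝ → ℝ) (hf : ContDiff ℝ (⊤ : ℕ∞) f)
    (u₀ : ℝ → ℝ) (hu₀m : Measurable u₀) (B : ℝ) (hu₀bdd : ∀ x, |u₀ x| ≤ B)
    (u : ℝ → ℝ → ℝ) (hum : Measurable (Function.uncurry u))
    (hubdd : ∃ M, ∀ t x, 0 ≤ t → |u t x| ≤ M)
    (hK : IsKruzkovSolution f u₀ u) :
    ∃ U α : ℝ → ℝ → ℝ,
      (∀ᵐ q : ℝ × ℝ, 0 ≤ q.1 → u q.1 q.2 = U q.1 (α q.1 q.2)) ∧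
      (∀ t, 0 ≤ t → Monotone (α t)) ∧
      (∀ t, 0 ≤ t → ∀ K : Set ℝ, IsCompact K →
        BddAbove (α t '' K) ∧ BddBelow (α t '' K)) ∧
      (∀ t, 0 ≤ t →
        (Differentiable ℝ u₀ → eVariationOn (deriv u₀) Set.univ ≠ ⊤ →
          ∃ g : ℝ → ℝ,
            (∀ a b : ℝ, U t b - U t a = ∫ s in a..b, g s) ∧
            eVariationOn g Set.univ ≤ eVariationOn (deriv u₀) Set.univ) ∧
        (∀ p : ℝ≥0∞, 1 < p → Differentiable ℝ u₀ →
          eLpNorm (deriv u₀) p volume ≠ ⊤ →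
          ∃ g : ℝ → ℝ,
            (∀ a b : ℝ, U t b - U t a = ∫ s in a..b, g s) ∧
            eLpNorm g p volume ≤ eLpNorm (deriv u₀) p volume ∧
            ∃ (Ch γ : NNReal), 0 < γ ∧ HolderWith Ch γ (U t))) := by
  obtain ⟨M0, hM0⟩ := hubdd
  by_cases hd : Differentiable ℝ u₀
  swap
  · refine ⟨u, fun _ x => x, Filter.Eventually.of_forall fun q _ => rfl, fun t _ => monotone_id,
      fun t _ K hK => ?_, fun t _ => ⟨fun h => absurd h hd, fun p _ h => absurd h hd⟩⟩
    rw [Set.image_id']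
    exact ⟨hK.bddAbove, hK.bddBelow⟩
  set M := max (max B M0) 0 with hMdef
  have hM : 0 ≤ M := le_max_right _ _
  have hBM : B ≤ M := (le_max_left _ _).trans (le_max_left _ _)
  have hM0M : M0 ≤ M := (le_max_right _ _).trans (le_max_left _ _)
  have hfd : Differentiable ℝ f := hf.differentiable (by simp)
  have hfd' : Continuous (deriv f) := hf.continuous_deriv (by simp)
  obtain ⟨L0, hL0⟩ := (isCompact_Icc (a := -M) (b := M)).exists_bound_of_continuousOn
    hfd'.continuousOn
  set L := max L0 1 with hLdef
  have hL1 : 1 ≤ L := le_max_right _ _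
  have hLip : ∀ a b, |a| ≤ M → |b| ≤ M → |L⁻¹ * (f a - f b)| ≤ |a - b| := by
    intro a b ha hb
    have h1 := (convex_Icc (-M) M).norm_image_sub_le_of_norm_deriv_le (f := f) (C := L)
      (fun x _ => hfd x) (fun x hx => (hL0 x hx).trans (le_max_left _ _))
      (abs_le.1 hb) (abs_le.1 ha)
    rw [Real.norm_eq_abs, Real.norm_eq_abs] at h1
    rw [abs_mul, abs_of_pos (by positivity)]
    rw [inv_mul_le_iff₀ (by positivity)]
    exact h1
  obtain ⟨α, hα1, hα2⟩ := exists_alpha f u₀ u L⁻¹ M (by positivity) hM hf.continuous hd.continuous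
    (fun x => (hu₀bdd x).trans hBM) hum (fun t x ht => (hM0 t x ht).trans hM0M) hK hLip
  have hgm : Measurable (deriv u₀) := measurable_deriv u₀
  refine ⟨fun _ => u₀, α, hα1, hα2, fun t ht K hKc => ⟨?_, ?_⟩, fun t ht => ⟨fun _ hv => ?_,
    fun p hp _ hv => ?_⟩⟩
  · exact (hα2 t ht).map_bddAbove hKc.bddAbove
  · exact (hα2 t ht).map_bddBelow hKc.bddBelow
  · exact ⟨deriv u₀, fun a b => (intervalIntegral.integral_eq_sub_of_hasDerivAt
      (fun x _ => (hd x).hasDerivAt) (bv_case _ hgm hv a b)).symm, le_rfl⟩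
  · have hU : ∀ a b : ℝ, u₀ b - u₀ a = ∫ s in a..b, deriv u₀ s := fun a b =>
      (intervalIntegral.integral_eq_sub_of_hasDerivAt
      (fun x _ => (hd x).hasDerivAt) (lp_case _ hgm p hp hv a b)).symm
    exact ⟨deriv u₀, hU, le_rfl, holder_case _ _ hgm p hp hv hU⟩
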